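/- Let n ≥ 2, let (M,g) = (ℝ^n, g) with reference point o be an asymptotically conical Riemannian manifold with opening angle α ∈ (0,π/2) and asymptotic decay rate μ > 0, and assume the exponential map of (M,g) is proper at each point. Let {γ_j : [0,∞) → M}_{j ∈ ℕ} be geodesic rays of (M,g) parametrised by g-arc-length with γ_j(0) ∈ ∂B(o,r) and unit initial velocity γ̇_j(0), such that (γ_j(0), γ̇_j(0)) → (p, ξ) as j → ∞ for some r > 0, p ∈ ∂B(o,r) and unit vector ξ ∈ T_pM. Define T_j := max{t > 0 : |γ_j(t)| = r}. Then each T_j is finite and sup_{j ∈ ℕ} T_j = sup_{j ∈ ℕ} ℓ_g(γ_j|_{[0,T_j]}) < ∞. -/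

import Mathlib

/-!
The argument is a stability statement for escaping to infinity.

An asymptotically conical metric is a `C²` field `B` of bilinear forms which is uniformly equivalent
to the Euclidean metric (`IsAsympConical.exists_niceMetric`) and which, far out, satisfies
`B x v x ≈ ⟪v, x⟫` and has small radial derivative `∂_x B` (`IsAsympConical.exists_nearCone`): the
cone metric is invariant under dilations, so only `A = g - g_cone` contributes to the latter.

Geodesics are given as local isometries of the distance, so first they are shown to solve the
geodesic equation (`NiceMetric.regularity`). A curve which is isometric on an interval is Lipschitz,
has speed at most one where it is differentiable (`speed_le_one`) and minimises the energy among
Lipschitz curves (`rdist_le_energy`). The first variation and the du Bois-Reymond lemma show that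
the momentum `P = B(γ)(γ̇)` agrees almost everywhere with a primitive of the force
`w ↦ ½ (∂_w B)(γ̇, γ̇)`; hence `γ` is `C¹` with `P` differentiable. Grönwall's inequality then gives
uniqueness and continuous dependence on the initial data (`exists_dependence`).

Along a unit speed geodesic, `u = B(γ)(γ̇, γ)` has derivative `1 + ½ (∂_γ B)(γ̇, γ̇)`, close to `1`
far out. So `u - (k/4)|γ|` grows linearly while the geodesic stays outside a large ball (`growth`).
Consequently a geodesic outside the ball with `u > (k/4)|γ|` never comes back (`escape`), and one
that stays outside eventually satisfies this open condition (`exists_escape_time`).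

Properness of the exponential map makes every geodesic ray leave every ball for good
(`ray_leaves`). The limit ray with initial data `(p, ξ)` therefore satisfies the escape condition at
some time `t₁`. By continuous dependence all but finitely many `γ j` satisfy it at the same time
`t₁` and cannot return to the sphere of radius `r` later; each of the finitely many others leaves
the ball for good at some finite time (`return_time_bound`).
-/

open scoped RealInnerProductSpace
open Real Set Filter

noncomputable section

/-- Euclidean `n`-space. -/
abbrev En (n : ℕ) : Type := EuclideanSpace ℝ (Fin n)

/-- A (pointwise) metric tensor on `ℝⁿ`: to each point it assigns a bilinear form,
recorded simply as an `ℝ`-valued function of two tangent vectors (tangent spaces being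
identified with `ℝⁿ`). -/
abbrev MetricTensor (n : ℕ) : Type := En n → En n → En n → ℝ

/-- The standard cone metric `g_{C_α^n}` of opening angle `α`, written in Cartesian
coordinates on `ℝⁿ \ {0}`:  `g_{C_α^n} = (1 - sin²α)·dρ⊗dρ + sin²α·(euclidean metric)`,
where `dρ(v) = ⟪v, x/‖x‖⟫`; this is `dρ⊗dρ + ρ² sin²α · g_{S^{n-1}}` in polar
coordinates. -/
def coneMetric (n : ℕ) (α : ℝ) : MetricTensor n := fun x v w =>
  (1 - Real.sin α ^ 2) * (⟪v, x⟫ * ⟪w, x⟫ / ‖x‖ ^ 2) + Real.sin α ^ 2 * ⟪v, w⟫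

variable {n : ℕ}

/-- Length of a curve on `[a,b]` with respect to a metric tensor. -/
def clen (G : MetricTensor n) (γ : ℝ → En n) (a b : ℝ) : ℝ :=
  ∫ t in a..b, Real.sqrt (G (γ t) (deriv γ t) (deriv γ t))

/-- Energy of a curve on `[a,b]` with respect to a metric tensor. -/
def cenergy (G : MetricTensor n) (γ : ℝ → En n) (a b : ℝ) : ℝ :=
  ∫ t in a..b, G (γ t) (deriv γ t) (deriv γ t)

/-- The Riemannian (length) distance induced by a metric tensor:
the infimum of lengths of `C¹` curves joining the two points. -/
def rdist (G : MetricTensor n) (x y : En n) : ℝ :=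
  sInf {L : ℝ | ∃ γ : ℝ → En n, ContDiff ℝ 1 γ ∧ γ 0 = x ∧ γ 1 = y ∧ L = clen G γ 0 1}

/-- The intrinsic (induced length) distance of the subset `S` for the metric tensor `G`:
the infimum of lengths of `C¹` curves joining the two points inside `S`. -/
def rdistIn (G : MetricTensor n) (S : Set (En n)) (x y : En n) : ℝ :=
  sInf {L : ℝ | ∃ γ : ℝ → En n, ContDiff ℝ 1 γ ∧ (∀ t ∈ Set.Icc (0:ℝ) 1, γ t ∈ S) ∧
    γ 0 = x ∧ γ 1 = y ∧ L = clen G γ 0 1}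

/-- `γ`, restricted to the parameter set `I`, is a geodesic of the distance `d` with
constant speed `c`: locally it is a homothety of factor `c` (for `c = 1` this is a local
isometry, i.e. the arc-length parametrisation). -/
def IsGeodesicOn (d : En n → En n → ℝ) (γ : ℝ → En n) (c : ℝ) (I : Set ℝ) : Prop :=
  ∀ t ∈ I, ∃ δ > 0, ∀ s ∈ I, ∀ u ∈ I, |s - t| < δ → |u - t| < δ →
    d (γ s) (γ u) = c * |s - u|

/-- A length-minimising geodesic segment from `p` to `q`, parametrised on `[0,1]`
with constant speed `d p q`. -/
def IsMinSeg (d : En n → En n → ℝ) (γ : ℝ → En n) (p q : En n) : Prop :=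
  γ 0 = p ∧ γ 1 = q ∧
    ∀ s ∈ Set.Icc (0:ℝ) 1, ∀ u ∈ Set.Icc (0:ℝ) 1, d (γ s) (γ u) = d p q * |s - u|

/-- The distance of the standard cone `C_α^n`. -/
def coneDist (n : ℕ) (α : ℝ) : En n → En n → ℝ := rdist (coneMetric n α)

/-- `(ℝⁿ, g)` is an asymptotically conical `C²` Riemannian manifold with opening
angle `α` and asymptotic decay rate `μ`: `g` is a complete `C²` Riemannian metric and
`A := g - g_{C_α^n}` has components whose derivatives of order `k ≤ 2` are
`O(|x|^{-μ-k})` at infinity. -/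
structure IsAsympConical (n : ℕ) (g : MetricTensor n) (α μ : ℝ) : Prop where
  symm : ∀ x v w, g x v w = g x w v
  add_left : ∀ x v w u, g x (v + w) u = g x v u + g x w u
  smul_left : ∀ x (a : ℝ) v u, g x (a • v) u = a * g x v u
  posdef : ∀ x v, v ≠ 0 → 0 < g x v v
  reg : ∀ i j : Fin n, ContDiff ℝ 2
    (fun x => g x (EuclideanSpace.single i 1) (EuclideanSpace.single j 1))
  decay : ∀ i j : Fin n, ∃ C R : ℝ, 0 < C ∧ ∀ x : En n, R ≤ ‖x‖ → ∀ k : ℕ, k ≤ 2 →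
    ‖iteratedFDeriv ℝ k (fun y =>
        g y (EuclideanSpace.single i 1) (EuclideanSpace.single j 1) -
        coneMetric n α y (EuclideanSpace.single i 1) (EuclideanSpace.single j 1)) x‖ ≤
      C * ‖x‖ ^ (-μ - (k : ℝ))
  complete : ∀ u : ℕ → En n,
    (∀ ε > 0, ∃ N, ∀ m ≥ N, ∀ k ≥ N, rdist g (u m) (u k) < ε) →
    ∃ x, ∀ ε > 0, ∃ N, ∀ m ≥ N, rdist g (u m) x < ε

/-- `ex` is the exponential map of the metric tensor `g` at the point `x`
(tangent spaces being identified with `ℝⁿ`): `ex v = γ_v(1)` where `γ_v` is the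
constant-speed geodesic with `γ_v(0) = x`, `γ̇_v(0) = v`. -/
def IsExpAt (g : MetricTensor n) (x : En n) (ex : En n → En n) : Prop :=
  ∀ v : En n, ∃ γ : ℝ → En n, γ 0 = x ∧ deriv γ 0 = v ∧
    IsGeodesicOn (rdist g) γ (Real.sqrt (g x v v)) Set.univ ∧ ex v = γ 1

/-- The exponential map of `g` exists and is proper at every point: preimages of
compact sets are compact. -/
def ProperExpAll (g : MetricTensor n) : Prop :=
  ∀ x : En n, ∃ ex : En n → En n, IsExpAt g x ex ∧
    ∀ K : Set (En n), IsCompact K → IsCompact (ex ⁻¹' K)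

/-- Second variation of the energy of `γ` on `[a,b]` along the variation field `V`
(using the global chart to form the variation `γ + s·V`). -/
def secondVar (g : MetricTensor n) (γ V : ℝ → En n) (a b : ℝ) : ℝ :=
  iteratedDeriv 2 (fun s : ℝ => cenergy g (fun t => γ t + s • V t) a b) 0

/-- The Morse index of `γ` on `[a,b]`, as a critical point of the energy, is at most
`m`: every linear space of `C¹` variation fields vanishing at the endpoints on which the
second variation of the energy is negative definite has dimension at most `m`. -/
def MorseIndexLEOn (g : MetricTensor n) (γ : ℝ → En n) (a b : ℝ) (m : ℕ) : Prop :=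
  ∀ W : Submodule ℝ (ℝ → En n),
    (∀ V ∈ W, ContDiff ℝ 1 V ∧ V a = 0 ∧ V b = 0) →
    (∀ V ∈ W, V ≠ 0 → secondVar g γ V a b < 0) →
    Module.rank ℝ W ≤ (m : Cardinal)

end

/-! ### Fields of bilinear forms and their distance -/

/-- A field of bilinear forms on `ℝⁿ`, with values in continuous bilinear maps. -/
abbrev BForm (n : ℕ) : Type := En n → En n →L[ℝ] En n →L[ℝ] ℝ

/-- The metric tensor underlying a field of bilinear forms. -/
noncomputable def BForm.toMetric {n : ℕ} (B : BForm n) : MetricTensor n := fun x v w => B x v w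

/-- A `C²` Riemannian metric on `ℝⁿ` uniformly equivalent to the Euclidean one,
`(k‖v‖)² ≤ B x v v ≤ (K‖v‖)²`. -/
structure NiceMetric {n : ℕ} (B : BForm n) (k K : ℝ) : Prop where
  contDiff : ContDiff ℝ 2 B
  symm : ∀ x v w, B x v w = B x w v
  k_pos : 0 < k
  K_pos : 0 < K
  lower : ∀ x v, (k * ‖v‖) ^ 2 ≤ B x v v
  upper : ∀ x v, B x v v ≤ (K * ‖v‖) ^ 2

namespace NiceMetric

variable {n : ℕ} {B : BForm n} {k K : ℝ}

lemma nonneg (hB : NiceMetric B k K) (x v : En n) : 0 ≤ B x v v :=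
  (sq_nonneg _).trans (hB.lower x v)

lemma lower_sqrt (hB : NiceMetric B k K) (x v : En n) : k * ‖v‖ ≤ √(B x v v) :=
  Real.le_sqrt_of_sq_le (hB.lower x v)

lemma upper_sqrt (hB : NiceMetric B k K) (x v : En n) : √(B x v v) ≤ K * ‖v‖ :=
  Real.sqrt_le_iff.2 ⟨mul_nonneg hB.K_pos.le (norm_nonneg _), hB.upper x v⟩

lemma cauchy (hB : NiceMetric B k K) (x v w : En n) :
    B x v w ≤ √(B x v v) * √(B x w w) := by
  rw [← Real.sqrt_mul (hB.nonneg x v)]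
  apply Real.le_sqrt_of_sq_le
  have h : ∀ s : ℝ, 0 ≤ B x w w * (s * s) + 2 * B x v w * s + B x v v := by
    intro s
    have := hB.nonneg x (v + s • w)
    simp only [map_add, map_smul, add_apply, smul_apply,
      smul_eq_mul, hB.symm x w v] at this
    linarith
  have := discrim_le_zero h
  unfold discrim at this
  nlinarith

lemma sqrt_add_le (hB : NiceMetric B k K) (x v w : En n) :
    √(B x (v + w) (v + w)) ≤ √(B x v v) + √(B x w w) := by
  rw [Real.sqrt_le_left (by positivity)]
  have h := hB.cauchy x v w
  have h1 := Real.sq_sqrt (hB.nonneg x v)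
  have h2 := Real.sq_sqrt (hB.nonneg x w)
  simp only [map_add, add_apply, hB.symm x w v]
  nlinarith

lemma continuous (hB : NiceMetric B k K) : Continuous B := hB.contDiff.continuous

lemma continuous_speed (hB : NiceMetric B k K) {c : ℝ → En n} (hc : ContDiff ℝ 1 c) :
    Continuous (fun t => √(B (c t) (deriv c t) (deriv c t))) := by
  have h1 : Continuous (deriv c) := hc.continuous_deriv le_rfl
  have h2 := hB.continuous.comp hc.continuous
  exact ((h2.clm_apply h1).clm_apply h1).sqrt

lemma clen_eq (c : ℝ → En n) (a b : ℝ) :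
    clen B.toMetric c a b = ∫ t in a..b, √(B (c t) (deriv c t) (deriv c t)) := rfl

lemma clen_nonneg (c : ℝ → En n) {a b : ℝ} (hab : a ≤ b) : 0 ≤ clen B.toMetric c a b :=
  intervalIntegral.integral_nonneg hab fun _ _ => Real.sqrt_nonneg _

lemma rdist_le_clen_unit {c : ℝ → En n} (hc : ContDiff ℝ 1 c) :
    rdist B.toMetric (c 0) (c 1) ≤ clen B.toMetric c 0 1 := by
  refine csInf_le ⟨0, ?_⟩ ⟨c, hc, rfl, rfl, rfl⟩
  rintro _ ⟨c, -, -, -, rfl⟩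
  exact clen_nonneg c zero_le_one

lemma rdist_le_clen {c : ℝ → En n} (hc : ContDiff ℝ 1 c)
    {a b : ℝ} (hab : a ≤ b) : rdist B.toMetric (c a) (c b) ≤ clen B.toMetric c a b := by
  have hd : Differentiable ℝ c := hc.differentiable (by norm_num)
  have h := rdist_le_clen_unit (B := B) (c := fun s => c (a + (b - a) * s)) (by fun_prop)
  have hderiv : ∀ s, deriv (fun s => c (a + (b - a) * s)) s
      = (b - a) • deriv c (a + (b - a) * s) := by
    intro s
    have h1 : HasDerivAt (fun s : ℝ => a + (b - a) * s) (b - a) s := by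
      simpa using ((hasDerivAt_id s).const_mul (b - a)).const_add a
    exact ((hd _).hasDerivAt.scomp s h1).deriv
  rw [clen_eq] at h ⊢
  simp only [hderiv, map_smul, smul_apply, smul_eq_mul, mul_zero, add_zero,
    mul_one, add_sub_cancel] at h
  refine h.trans (le_of_eq ?_)
  have h2 : ∀ t : ℝ, √((b - a) * ((b - a) * t)) = (b - a) * √t := by
    intro t
    rw [← mul_assoc, Real.sqrt_mul (by positivity), Real.sqrt_mul_self (by linarith)]
  simp_rw [h2]
  rw [intervalIntegral.integral_const_mul]
  have := intervalIntegral.mul_integral_comp_add_mul (a := 0) (b := 1)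
    (f := fun t => √(B (c t) (deriv c t) (deriv c t))) (b - a) a
  simpa using this

/-- A linear estimate of the speed integrates to a linear estimate of the displacement. -/
lemma displacement_le (hB : NiceMetric B k K) {c : ℝ → En n} (hc : ContDiff ℝ 1 c)
    (L : En n →L[ℝ] ℝ) {a b : ℝ} (hab : a ≤ b)
    (hL : ∀ t ∈ Icc a b, L (deriv c t) ≤ √(B (c t) (deriv c t) (deriv c t))) :
    L (c b - c a) ≤ clen B.toMetric c a b := by
  have hd : Differentiable ℝ c := hc.differentiable (by norm_num)
  have h1 : Continuous (deriv c) := hc.continuous_deriv le_rfl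
  have h2 : ∫ t in a..b, L (deriv c t) = L (c b) - L (c a) :=
    intervalIntegral.integral_eq_sub_of_hasDerivAt
      (fun t _ => L.hasFDerivAt.comp_hasDerivAt t (hd t).hasDerivAt)
      ((L.continuous.comp h1).intervalIntegrable _ _)
  rw [map_sub, ← h2, clen_eq]
  exact intervalIntegral.integral_mono_on hab ((L.continuous.comp h1).intervalIntegrable _ _)
    ((hB.continuous_speed hc).intervalIntegrable _ _) hL

lemma norm_sub_le_clen (hB : NiceMetric B k K) {c : ℝ → En n} (hc : ContDiff ℝ 1 c)
    {a b : ℝ} (hab : a ≤ b) : k * ‖c b - c a‖ ≤ clen B.toMetric c a b := by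
  by_cases h0 : c b - c a = 0
  · simpa [h0] using clen_nonneg (B := B) c hab
  have hpos : 0 < ‖c b - c a‖ := norm_pos_iff.2 h0
  have := hB.displacement_le hc ((k / ‖c b - c a‖) • innerSL ℝ (c b - c a)) hab (by
    intro t _
    refine le_trans ?_ (hB.lower_sqrt _ _)
    have := real_inner_le_norm (c b - c a) (deriv c t)
    simp only [smul_apply, innerSL_apply_apply, smul_eq_mul]
    calc k / ‖c b - c a‖ * inner ℝ (c b - c a) (deriv c t)
        ≤ k / ‖c b - c a‖ * (‖c b - c a‖ * ‖deriv c t‖) := by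
          have := hB.k_pos; gcongr
      _ = _ := by field_simp)
  simp only [smul_apply, innerSL_apply_apply, smul_eq_mul,
    real_inner_self_eq_norm_sq] at this
  calc _ = _ := by field_simp
    _ ≤ _ := this

lemma exists_curve_lt (x y : En n) {L : ℝ}
    (h : rdist B.toMetric x y < L) :
    ∃ c : ℝ → En n, ContDiff ℝ 1 c ∧ c 0 = x ∧ c 1 = y ∧ clen B.toMetric c 0 1 < L := by
  obtain ⟨_, ⟨c, hc, h0, h1, rfl⟩, hlt⟩ := exists_lt_of_csInf_lt
    (s := {L : ℝ | ∃ γ : ℝ → En n, ContDiff ℝ 1 γ ∧ γ 0 = x ∧ γ 1 = y ∧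
      L = clen B.toMetric γ 0 1})
    ⟨_, fun s => x + s • (y - x), by fun_prop, by simp, by simp, rfl⟩ h
  exact ⟨c, hc, h0, h1, hlt⟩

lemma le_rdist (hB : NiceMetric B k K) (x y : En n) : k * ‖y - x‖ ≤ rdist B.toMetric x y := by
  refine le_of_forall_gt fun L hL => ?_
  obtain ⟨c, hc, rfl, rfl, hlt⟩ := exists_curve_lt x y hL
  exact (hB.norm_sub_le_clen hc zero_le_one).trans_lt hlt

/-- Sharp infinitesimal lower bound for the distance: near `x` it is at least `1 - ε` times
the norm of the metric frozen at `x`. A curve of length less than `ρ` cannot leave the Euclidean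
ball of radius `ρ / k`, on which the metric varies little. -/
lemma sharp_le_rdist (hB : NiceMetric B k K) (x : En n) {ε : ℝ} (hε : 0 < ε) (hε1 : ε < 1) :
    ∃ ρ > 0, ∀ y, rdist B.toMetric x y < ρ →
      (1 - ε) * √(B x (y - x) (y - x)) ≤ rdist B.toMetric x y := by
  -- on a ball `|B z v v - B x v v| ≤ η ‖v‖²`, with `η = k² ε`
  have hk := hB.k_pos
  obtain ⟨δ, hδ, hball⟩ := (Metric.continuousAt_iff (f := B) (a := x)).1 hB.continuous.continuousAt
    (k ^ 2 * ε) (by positivity)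
  have hcmp : ∀ z, ‖z - x‖ < δ → ∀ v, (1 - ε) * √(B x v v) ≤ √(B z v v) := by
    intro z hz v
    have h1 : ‖B z - B x‖ < k ^ 2 * ε :=
      (dist_eq_norm (B z) (B x)).symm.trans_lt (hball (x := z) (by rwa [dist_eq_norm]))
    have h2 : |B z v v - B x v v| ≤ k ^ 2 * ε * ‖v‖ * ‖v‖ := by
      have := (B z - B x).le_opNorm₂ v v
      simp only [sub_apply, Real.norm_eq_abs] at this
      refine this.trans ?_
      gcongr
    have h3 := hB.lower x v
    have h4 := (abs_le.1 h2).1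
    apply Real.le_sqrt_of_sq_le
    rw [mul_pow, Real.sq_sqrt (hB.nonneg x v)]
    have h5 : (1 - ε) ^ 2 ≤ 1 - ε := by nlinarith
    have h6 := mul_le_mul_of_nonneg_right h5 (hB.nonneg x v)
    nlinarith
  refine ⟨k * δ, by positivity, fun y hy => ?_⟩
  by_cases h0 : √(B x (y - x) (y - x)) = 0
  · rw [h0, mul_zero]
    exact (mul_nonneg hk.le (norm_nonneg _)).trans (hB.le_rdist x y)
  refine le_of_forall_gt_imp_ge_of_dense fun L hL => ?_
  obtain ⟨c, hc, rfl, rfl, hlt⟩ := exists_curve_lt (B := B) x y (lt_min hL hy)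
  have hstay : ∀ t ∈ Icc (0 : ℝ) 1, ‖c t - c 0‖ < δ := by
    intro t ht
    have h1 := hB.norm_sub_le_clen hc ht.1
    have h2 : clen B.toMetric c 0 t ≤ clen B.toMetric c 0 1 :=
      intervalIntegral.integral_mono_interval le_rfl ht.1 ht.2
        (Eventually.of_forall fun _ => Real.sqrt_nonneg _)
        ((hB.continuous_speed hc).intervalIntegrable _ _)
    have h3 := hlt.trans_le (min_le_right _ _)
    exact lt_of_mul_lt_mul_left ((h1.trans h2).trans_lt h3) hk.le
  have hpos : 0 < √(B (c 0) (c 1 - c 0) (c 1 - c 0)) :=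
    lt_of_le_of_ne (Real.sqrt_nonneg _) (Ne.symm h0)
  set N := √(B (c 0) (c 1 - c 0) (c 1 - c 0)) with hN
  have := hB.displacement_le hc (((1 - ε) / N) • B (c 0) (c 1 - c 0)) zero_le_one (by
    intro t ht
    refine le_trans ?_ (hcmp _ (hstay t ht) _)
    simp only [smul_apply, smul_eq_mul]
    have h1 : (0:ℝ) < 1 - ε := by linarith
    calc (1 - ε) / N * B (c 0) (c 1 - c 0) (deriv c t)
        ≤ (1 - ε) / N * (N * √(B (c 0) (deriv c t) (deriv c t))) := by
          gcongr; exact hB.cauchy _ _ _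
      _ = _ := by field_simp)
  have h2 : B (c 0) (c 1 - c 0) (c 1 - c 0) = N ^ 2 := (Real.sq_sqrt (hB.nonneg _ _)).symm
  simp only [smul_apply, smul_eq_mul, h2] at this
  calc (1 - ε) * N = (1 - ε) / N * N ^ 2 := by field_simp
    _ ≤ _ := this
    _ ≤ L := (hlt.trans_le (min_le_left _ _)).le

end NiceMetric

/-! ### Distance and energy -/

open MeasureTheory in
lemma intervalIntegrable_of_bdd {F : Type*} [NormedAddCommGroup F] {f : ℝ → F} {M a b : ℝ}
    (hf : AEStronglyMeasurable f volume) (hb : ∀ t, ‖f t‖ ≤ M) :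
    IntervalIntegrable f volume a b :=
  (intervalIntegrable_const (c := M)).mono_fun' hf.restrict (Eventually.of_forall hb)

lemma norm_integral_le_of_bdd {F : Type*} [NormedAddCommGroup F] [NormedSpace ℝ F]
    {f : ℝ → F} {M a b : ℝ} (hb : ∀ t, ‖f t‖ ≤ M) :
    ‖∫ t in a..b, f t‖ ≤ M * |b - a| :=
  intervalIntegral.norm_integral_le_of_norm_le_const fun t _ => hb t

lemma lipschitzWith_integral {F : Type*} [NormedAddCommGroup F] [NormedSpace ℝ F]
    {f : ℝ → F} {M : ℝ} (a : ℝ) (hf : MeasureTheory.AEStronglyMeasurable f MeasureTheory.volume)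
    (hb : ∀ t, ‖f t‖ ≤ M) :
    LipschitzWith M.toNNReal (fun t => ∫ s in a..t, f s) := by
  have hM : 0 ≤ M := (norm_nonneg _).trans (hb 0)
  refine LipschitzWith.of_dist_le_mul fun s t => ?_
  rw [dist_eq_norm, intervalIntegral.integral_interval_sub_left (intervalIntegrable_of_bdd hf hb)
    (intervalIntegrable_of_bdd hf hb), Real.coe_toNNReal _ hM, Real.dist_eq]
  exact norm_integral_le_of_bdd hb

namespace NiceMetric

variable {n : ℕ} {B : BForm n} {k K : ℝ}

lemma measurable_energy (hB : NiceMetric B k K) {x w : ℝ → En n} (hx : Continuous x)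
    (hw : Measurable w) : Measurable (fun t => B (x t) (w t) (w t)) := by
  have hc : Continuous (fun p : En n × En n => B p.1 p.2 p.2) :=
    ((hB.continuous.comp continuous_fst).clm_apply continuous_snd).clm_apply continuous_snd
  exact hc.measurable.comp (hx.measurable.prodMk hw)

lemma intervalIntegrable_energy (hB : NiceMetric B k K) {x w : ℝ → En n} (hx : Continuous x)
    (hw : Measurable w) {M : ℝ} (hM : ∀ t, ‖w t‖ ≤ M) (a b : ℝ) :
    IntervalIntegrable (fun t => B (x t) (w t) (w t)) MeasureTheory.volume a b := by
  refine intervalIntegrable_of_bdd (M := (K * M) ^ 2)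
    (hB.measurable_energy hx hw).aestronglyMeasurable fun t => ?_
  rw [Real.norm_of_nonneg (hB.nonneg _ _)]
  refine (hB.upper _ _).trans ?_
  have := hB.K_pos
  have := hM t
  gcongr

/-- Distance and energy along a Lipschitz curve `x` with derivative `w`:
`2 d(x(a), x(b)) ≤ ∫ |w|² + (b - a)`. The distance only involves `C¹` curves, so `w` is
approximated in `L¹` by continuous functions with the same integral. -/
lemma rdist_le_energy (hB : NiceMetric B k K) {a b : ℝ} (hab : a < b) (x₀ : En n)
    {w : ℝ → En n} (hw : Measurable w) {M : ℝ} (hM : ∀ t, ‖w t‖ ≤ M) :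
    rdist B.toMetric x₀ (x₀ + ∫ s in a..b, w s) ≤
      ((∫ t in a..b, B (x₀ + ∫ s in a..t, w s) (w t) (w t)) + (b - a)) / 2 := by
  have hM0 : 0 ≤ M := (norm_nonneg _).trans (hM 0)
  have hba : 0 < b - a := sub_pos.2 hab
  have hK := hB.K_pos
  have hwi : ∀ c d, IntervalIntegrable w MeasureTheory.volume c d := fun c d =>
    intervalIntegrable_of_bdd hw.aestronglyMeasurable hM
  set x : ℝ → En n := fun t => x₀ + ∫ s in a..t, w s with hx
  have hxc : Continuous x :=
    continuous_const.add (lipschitzWith_integral a hw.aestronglyMeasurable hM).continuous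
  obtain ⟨Λ, hΛ⟩ := (hB.contDiff.contDiffOn (s := Metric.closedBall x₀ (M * (b - a) + 2))
    ).exists_lipschitzOnWith (by norm_num) (convex_closedBall _ _) (isCompact_closedBall _ _)
  refine le_of_forall_pos_le_add fun ε hε => ?_
  set Q : ℝ := 2 * K + Λ * M ^ 2 * (b - a) + 1 with hQ
  have hQ0 : 0 < Q := by positivity
  set δ : ℝ := min 1 (ε / Q) with hδ
  have hδ0 : 0 < δ := by positivity
  have hδQ : δ * Q ≤ ε := by
    have : δ ≤ ε / Q := min_le_right _ _
    rwa [le_div_iff₀ hQ0] at this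
  obtain ⟨φ, hφ, -⟩ := ((hwi a b).1).exists_boundedContinuous_integral_sub_le hδ0
  have hφc : Continuous φ := φ.continuous
  rw [← intervalIntegral.integral_of_le hab.le] at hφ
  have hφi : ∀ c d, IntervalIntegrable φ MeasureTheory.volume c d := fun c d =>
    hφc.intervalIntegrable c d
  -- the constant `κ` corrects the mean of the continuous approximation `φ`
  set κ : En n := (b - a)⁻¹ • ∫ t in a..b, (w t - φ t) with hκ
  have hκn : (b - a) * ‖κ‖ ≤ δ := by
    rw [hκ, norm_smul, norm_inv, Real.norm_of_nonneg hba.le, ← mul_assoc,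
      mul_inv_cancel₀ hba.ne', one_mul]
    exact (intervalIntegral.norm_integral_le_integral_norm hab.le).trans hφ
  set w' : ℝ → En n := fun t => φ t + κ with hw'
  have hw'c : Continuous w' := hφc.add continuous_const
  have hw'i : ∀ c d, IntervalIntegrable w' MeasureTheory.volume c d := fun c d =>
    hw'c.intervalIntegrable c d
  set y : ℝ → En n := fun t => x₀ + ∫ s in a..t, w' s with hy
  have hyd : ∀ t, HasDerivAt y (w' t) t := fun t =>
    ((hw'c.integral_hasStrictDerivAt a t).hasDerivAt).const_add x₀
  have hyderiv : deriv y = w' := funext fun t => (hyd t).deriv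
  have hyC : ContDiff ℝ 1 y := by
    rw [contDiff_one_iff_deriv]
    exact ⟨fun t => (hyd t).differentiableAt, hyderiv ▸ hw'c⟩
  have hya : y a = x₀ := by simp [hy]
  have hyb : y b = x b := by
    simp only [hy, hx, hw']
    rw [intervalIntegral.integral_add (hφi a b) (by simp), intervalIntegral.integral_const, hκ,
      smul_smul, mul_inv_cancel₀ hba.ne', one_smul,
      intervalIntegral.integral_sub (hwi a b) (hφi a b)]
    congr 1
    abel
  have hdiffi : ∀ c d, IntervalIntegrable (fun t => ‖w' t - w t‖) MeasureTheory.volume c d :=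
    fun c d => ((hw'i c d).sub (hwi c d)).norm
  have hL1 : ∫ t in a..b, ‖w' t - w t‖ ≤ 2 * δ := by
    calc ∫ t in a..b, ‖w' t - w t‖ ≤ ∫ t in a..b, (‖w t - φ t‖ + ‖κ‖) := by
          refine intervalIntegral.integral_mono_on hab.le (hdiffi a b)
            (((hwi a b).sub (hφi a b)).norm.add (by simp)) fun t _ => ?_
          have : w' t - w t = -(w t - φ t) + κ := by simp only [hw']; abel
          rw [this]
          exact (norm_add_le _ _).trans (by rw [norm_neg])
      _ ≤ 2 * δ := by
          rw [intervalIntegral.integral_add ((hwi a b).sub (hφi a b)).norm (by simp),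
            intervalIntegral.integral_const, smul_eq_mul]
          linarith
  have hclose : ∀ t ∈ Icc a b, ‖y t - x t‖ ≤ 2 * δ := by
    intro t ht
    have : y t - x t = ∫ s in a..t, (w' s - w s) := by
      rw [intervalIntegral.integral_sub (hw'i _ _) (hwi _ _)]
      simp only [hy, hx]; abel
    rw [this]
    refine ((intervalIntegral.norm_integral_le_integral_norm ht.1).trans ?_).trans hL1
    exact intervalIntegral.integral_mono_interval le_rfl ht.1 ht.2
      (Eventually.of_forall fun _ => norm_nonneg _) (hdiffi a b)
  have hxball : ∀ t ∈ Icc a b, ‖x t - x₀‖ ≤ M * (b - a) := by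
    intro t ht
    simp only [hx, add_sub_cancel_left]
    refine (norm_integral_le_of_bdd hM).trans ?_
    rw [abs_of_nonneg (by linarith [ht.1])]
    have := ht.2
    gcongr
  have hδ1 : δ ≤ 1 := min_le_left _ _
  have hpt : ∀ t ∈ Icc a b, √(B (y t) (deriv y t) (deriv y t)) ≤
      (B (x t) (w t) (w t) + 1) / 2 + (Λ * M ^ 2 * δ + K * ‖w' t - w t‖) := by
    intro t ht
    rw [hyderiv]
    have h1 : √(B (y t) (w' t) (w' t)) ≤ √(B (y t) (w t) (w t)) + K * ‖w' t - w t‖ := by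
      have h := hB.sqrt_add_le (y t) (w t) (w' t - w t)
      rw [add_sub_cancel] at h
      exact h.trans (by gcongr; exact hB.upper_sqrt _ _)
    have h2 : √(B (y t) (w t) (w t)) ≤ (B (y t) (w t) (w t) + 1) / 2 := by
      nlinarith [sq_nonneg (√(B (y t) (w t) (w t)) - 1), Real.sq_sqrt (hB.nonneg (y t) (w t))]
    have h3 : B (y t) (w t) (w t) ≤ B (x t) (w t) (w t) + Λ * (2 * δ) * M * M := by
      have hxt := hxball t ht
      have hyt : ‖y t - x₀‖ ≤ M * (b - a) + 2 := by
        have : y t - x₀ = (y t - x t) + (x t - x₀) := by abel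
        rw [this]
        exact (norm_add_le _ _).trans (by linarith [hclose t ht])
      have h4 : ‖B (y t) - B (x t)‖ ≤ Λ * (2 * δ) := by
        refine (hΛ.norm_sub_le (by simpa [dist_eq_norm] using hyt)
          (by rw [Metric.mem_closedBall, dist_eq_norm]; linarith)).trans ?_
        gcongr
        exact hclose t ht
      have h5 := (B (y t) - B (x t)).le_opNorm₂ (w t) (w t)
      have h6 : ‖B (y t) - B (x t)‖ * ‖w t‖ * ‖w t‖ ≤ Λ * (2 * δ) * M * M := by
        have := hM t
        gcongr
      have h7 := (Real.le_norm_self _).trans (h5.trans h6)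
      simp only [sub_apply] at h7
      linarith
    linarith
  have henergy := hB.intervalIntegrable_energy hxc hw hM a b
  have h := rdist_le_clen (B := B) hyC hab.le
  rw [hya, hyb] at h
  refine h.trans ?_
  rw [clen_eq]
  have hi1 : IntervalIntegrable (fun t => (B (x t) (w t) (w t) + 1) / 2)
      MeasureTheory.volume a b := (henergy.add (by simp)).div_const 2
  have hi2 : IntervalIntegrable (fun t => K * ‖w' t - w t‖) MeasureTheory.volume a b :=
    (hdiffi a b).const_mul K
  have hi3 : IntervalIntegrable (fun _ : ℝ => (Λ : ℝ) * M ^ 2 * δ) MeasureTheory.volume a b := by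
    simp
  have hmono := intervalIntegral.integral_mono_on hab.le
    ((hB.continuous_speed hyC).intervalIntegrable a b) (hi1.add (hi3.add hi2)) hpt
  refine hmono.trans ?_
  rw [intervalIntegral.integral_add hi1 (hi3.add hi2), intervalIntegral.integral_add hi3 hi2,
    intervalIntegral.integral_const, intervalIntegral.integral_const_mul,
    intervalIntegral.integral_div, intervalIntegral.integral_add henergy (by simp),
    intervalIntegral.integral_const]
  simp only [smul_eq_mul, mul_one]
  have h8 : K * ∫ t in a..b, ‖w' t - w t‖ ≤ K * (2 * δ) := by gcongr
  have h9 : (b - a) * (Λ * M ^ 2 * δ) + K * (2 * δ) ≤ ε := by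
    refine le_trans ?_ hδQ
    rw [hQ]
    nlinarith
  linarith

end NiceMetric

/-! ### Isometric curves: speed and first variation -/

lemma LipschitzWith.integral_deriv_eq_sub_vec {n : ℕ} {C : NNReal} {f : ℝ → En n}
    (hf : LipschitzWith C f) (a b : ℝ) : ∫ t in a..b, deriv f t = f b - f a := by
  have hm : Measurable (deriv f) := measurable_deriv f
  have hb : ∀ t, ‖deriv f t‖ ≤ C := fun t => norm_deriv_le_of_lipschitz hf
  have hi : IntervalIntegrable (deriv f) MeasureTheory.volume a b :=
    intervalIntegrable_of_bdd hm.aestronglyMeasurable hb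
  have hac : AbsolutelyContinuousOnInterval (fun x => f x - ∫ t in a..x, deriv f t) a b :=
    (hf.lipschitzOnWith.absolutelyContinuousOnInterval).fun_sub
      ((lipschitzWith_integral a hm.aestronglyMeasurable
        hb).lipschitzOnWith.absolutelyContinuousOnInterval)
  have h0 : ∀ᵐ x, x ∈ uIcc a b → HasDerivAt (fun x => f x - ∫ t in a..x, deriv f t) 0 x := by
    filter_upwards [hf.ae_differentiableAt_real, hi.ae_hasDerivAt_integral] with x h1 h2 h3
    simpa using h1.hasDerivAt.fun_sub (h2 h3 a (by simp))
  obtain ⟨c, hc⟩ := hac.const_of_ae_hasDerivAt_zero h0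
  have h1 := hc a (by simp)
  have h2 := hc b (by simp)
  simp only [intervalIntegral.integral_same, sub_zero] at h1
  rw [h1, ← h2]
  abel

/-- Integration by parts for primitives of integrable functions. -/
lemma integral_primitive_mul {f φ : ℝ → ℝ} {a b : ℝ}
    (hf : IntervalIntegrable f MeasureTheory.volume a b)
    (hφ : IntervalIntegrable φ MeasureTheory.volume a b) :
    ∫ t in a..b, (∫ s in a..t, f s) * φ t =
      (∫ s in a..b, f s) * (∫ s in a..b, φ s) - ∫ t in a..b, f t * ∫ s in a..t, φ s := by
  have h := AbsolutelyContinuousOnInterval.integral_mul_deriv_eq_deriv_mul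
    (hf.absolutelyContinuousOnInterval_intervalIntegral (c := a) (by simp))
    (hφ.absolutelyContinuousOnInterval_intervalIntegral (c := a) (by simp))
  have e1 : ∫ t in a..b, (∫ s in a..t, f s) * φ t =
      ∫ t in a..b, (∫ s in a..t, f s) * deriv (fun x => ∫ s in a..x, φ s) t := by
    apply intervalIntegral.integral_congr_ae
    filter_upwards [hφ.ae_hasDerivAt_integral] with t ht hm
    rw [(ht (uIoc_subset_uIcc hm) a (by simp)).deriv]
  have e2 : ∫ t in a..b, f t * (∫ s in a..t, φ s) =
      ∫ t in a..b, deriv (fun x => ∫ s in a..x, f s) t * (∫ s in a..t, φ s) := by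
    apply intervalIntegral.integral_congr_ae
    filter_upwards [hf.ae_hasDerivAt_integral] with t ht hm
    rw [(ht (uIoc_subset_uIcc hm) a (by simp)).deriv]
  rw [e1, e2, h]
  simp

lemma contDiff_fderiv_bilinear {E F G H : Type*} [NormedAddCommGroup E] [NormedSpace ℝ E]
    [NormedAddCommGroup F] [NormedSpace ℝ F] [NormedAddCommGroup G] [NormedSpace ℝ G]
    [NormedAddCommGroup H] [NormedSpace ℝ H] {f : E → F →L[ℝ] G →L[ℝ] H} (hf : ContDiff ℝ 2 f) :
    ContDiff ℝ 1 (fun p : E × E × F × G => fderiv ℝ f p.1 p.2.1 p.2.2.1 p.2.2.2) := by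
  have := hf.fderiv_right (m := 1) (by norm_num)
  fun_prop

/-- The covector `w ↦ ½ (∂_w B)(v, v)`, the right-hand side of the Euler–Lagrange equation of the
energy. -/
noncomputable def BForm.force {n : ℕ} (B : BForm n) (x v : En n) : En n →L[ℝ] ℝ :=
  (1 / 2 : ℝ) • ((fderiv ℝ B x).flip v).flip v

lemma BForm.force_apply {n : ℕ} (B : BForm n) (x v w : En n) :
    B.force x v w = 1 / 2 * fderiv ℝ B x w v v := rfl

namespace NiceMetric

variable {n : ℕ} {B : BForm n} {k K : ℝ}

lemma contDiff_fderiv (hB : NiceMetric B k K) : ContDiff ℝ 1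
    (fun p : En n × En n × En n × En n => fderiv ℝ B p.1 p.2.1 p.2.2.1 p.2.2.2) :=
  contDiff_fderiv_bilinear hB.contDiff

lemma contDiff_force (hB : NiceMetric B k K) :
    ContDiff ℝ 1 (fun p : En n × En n => B.force p.1 p.2) := by
  rw [contDiff_clm_apply_iff]
  intro w
  simp only [BForm.force_apply]
  have h1 : ContDiff ℝ 1 (fun p : En n × En n => fderiv ℝ B p.1 w p.2 p.2) :=
    hB.contDiff_fderiv.comp (g := fun p : En n × En n × En n × En n =>
      fderiv ℝ B p.1 p.2.1 p.2.2.1 p.2.2.2) (f := fun p : En n × En n => (p.1, w, p.2, p.2))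
      (by fun_prop)
  exact contDiff_const.mul h1

/-- A curve which is isometric on `[a, b]` has speed at most one wherever it is differentiable. -/
lemma speed_le_one (hB : NiceMetric B k K) {γ : ℝ → En n} {a b : ℝ}
    (hiso : ∀ s ∈ Icc a b, ∀ u ∈ Icc a b, rdist B.toMetric (γ s) (γ u) = |s - u|)
    {t : ℝ} (ht : t ∈ Ioo a b) (hd : DifferentiableAt ℝ γ t) :
    B (γ t) (deriv γ t) (deriv γ t) ≤ 1 := by
  have key : ∀ ε : ℝ, 0 < ε → ε < 1 →
      (1 - ε) * √(B (γ t) (deriv γ t) (deriv γ t)) ≤ 1 := by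
    intro ε hε hε1
    obtain ⟨ρ, hρ, h⟩ := hB.sharp_le_rdist (γ t) hε hε1
    have hlim : Tendsto (fun s => (1 - ε) * √(B (γ t) (slope γ t s) (slope γ t s)))
        (nhdsWithin t {t}ᶜ) (nhds ((1 - ε) * √(B (γ t) (deriv γ t) (deriv γ t)))) := by
      have hc : Continuous (fun v : En n => (1 - ε) * √(B (γ t) v v)) := by fun_prop
      exact (hc.tendsto _).comp hd.hasDerivAt.tendsto_slope
    refine le_of_tendsto hlim ?_
    have e1 : ∀ᶠ s in nhdsWithin t {t}ᶜ, s ∈ Icc a b :=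
      nhdsWithin_le_nhds (Icc_mem_nhds ht.1 ht.2)
    have e2 : ∀ᶠ s in nhdsWithin t {t}ᶜ, |s - t| < ρ := by
      have := Metric.ball_mem_nhds t hρ
      exact nhdsWithin_le_nhds (by filter_upwards [this] with s hs; simpa [Real.dist_eq] using hs)
    filter_upwards [e1, e2, self_mem_nhdsWithin] with s h1 h2 h3
    have h4 := hiso t (Ioo_subset_Icc_self ht) s h1
    rw [abs_sub_comm] at h4
    have h5 := h (γ s) (h4 ▸ h2)
    have hne : s - t ≠ 0 := sub_ne_zero.2 h3
    rw [h4] at h5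
    have h6 : B (γ t) (slope γ t s) (slope γ t s)
        = (s - t)⁻¹ ^ 2 * B (γ t) (γ s - γ t) (γ s - γ t) := by
      simp only [slope, vsub_eq_sub, map_smul, smul_apply, smul_eq_mul]; ring
    rw [h6, Real.sqrt_mul (sq_nonneg _), Real.sqrt_sq_eq_abs, abs_inv]
    calc (1 - ε) * (|s - t|⁻¹ * √(B (γ t) (γ s - γ t) (γ s - γ t)))
        = |s - t|⁻¹ * ((1 - ε) * √(B (γ t) (γ s - γ t) (γ s - γ t))) := by ring
      _ ≤ |s - t|⁻¹ * |s - t| := by gcongr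
      _ = 1 := inv_mul_cancel₀ (abs_ne_zero.2 hne)
  have h1 : √(B (γ t) (deriv γ t) (deriv γ t)) ≤ 1 := by
    by_contra hlt
    push Not at hlt
    set s := √(B (γ t) (deriv γ t) (deriv γ t))
    have := key ((1 - 1 / s) / 2) (by have : 1 / s < 1 := by rw [div_lt_one] <;> linarith
                                      linarith) (by have : 0 < 1 / s := by positivity
                                                    linarith)
    have h2 : s * (1 / s) = 1 := by field_simp
    nlinarith
  nlinarith [Real.sq_sqrt (hB.nonneg (γ t) (deriv γ t)),
    Real.sqrt_nonneg (B (γ t) (deriv γ t) (deriv γ t))]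

/-- Isometric curves are critical points of the energy: by `rdist_le_energy` they minimise it among
Lipschitz curves with the same endpoints. The variation field is the primitive of `ψ`. -/
lemma first_variation (hB : NiceMetric B k K) {γ : ℝ → En n} {a b : ℝ} (hab : a < b)
    {C : NNReal} (hγ : LipschitzWith C γ)
    (hiso : ∀ s ∈ Icc a b, ∀ u ∈ Icc a b, rdist B.toMetric (γ s) (γ u) = |s - u|)
    {ψ : ℝ → En n} (hψ : Measurable ψ) {M : ℝ} (hM : ∀ t, ‖ψ t‖ ≤ M)
    (hψ0 : ∫ t in a..b, ψ t = 0) :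
    ∫ t in a..b, (B.force (γ t) (deriv γ t) (∫ s in a..t, ψ s)
      + B (γ t) (deriv γ t) (ψ t)) = 0 := by
  set w := deriv γ with hw
  have hwm : Measurable w := measurable_deriv γ
  have hwb : ∀ t, ‖w t‖ ≤ C := fun t => norm_deriv_le_of_lipschitz hγ
  have hM0 : 0 ≤ M := (norm_nonneg _).trans (hM 0)
  set V : ℝ → En n := fun t => ∫ s in a..t, ψ s with hV
  have hVc : Continuous V := (lipschitzWith_integral a hψ.aestronglyMeasurable hM).continuous
  have hwi : ∀ c d, IntervalIntegrable w MeasureTheory.volume c d := fun c d =>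
    intervalIntegrable_of_bdd hwm.aestronglyMeasurable hwb
  have hψi : ∀ c d, IntervalIntegrable ψ MeasureTheory.volume c d := fun c d =>
    intervalIntegrable_of_bdd hψ.aestronglyMeasurable hM
  set J : ℝ → ℝ := fun ε => ∫ t in a..b, B (γ t + ε • V t) (w t + ε • ψ t) (w t + ε • ψ t) with hJ
  have hJge : ∀ ε, b - a ≤ J ε := by
    intro ε
    have hεψ : ∀ c d, IntervalIntegrable (fun s => ε • ψ s) MeasureTheory.volume c d :=
      fun c d => (hψi c d).smul ε
    have hprim : ∀ t, γ a + ∫ s in a..t, (w s + ε • ψ s) = γ t + ε • V t := by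
      intro t
      rw [intervalIntegral.integral_add (hwi _ _) (hεψ _ _),
        hγ.integral_deriv_eq_sub_vec, intervalIntegral.integral_smul]
      simp only [hV]; abel
    have h := hB.rdist_le_energy hab (γ a) (w := fun t => w t + ε • ψ t)
      (hwm.add (hψ.const_smul ε)) (M := C + |ε| * M) (fun t => by
        refine (norm_add_le _ _).trans ?_
        rw [norm_smul, Real.norm_eq_abs]
        have h1 := hwb t
        have h2 := hM t
        gcongr)
    simp only [hprim] at h
    have hVb : V b = 0 := hψ0
    rw [hVb, smul_zero, add_zero, hiso a (left_mem_Icc.2 hab.le) b (right_mem_Icc.2 hab.le),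
      abs_sub_comm, abs_of_pos (sub_pos.2 hab)] at h
    simp only [hJ]
    linarith
  have hJ0 : J 0 ≤ b - a := by
    simp only [hJ, zero_smul, add_zero]
    calc ∫ t in a..b, B (γ t) (w t) (w t) ≤ ∫ t in a..b, (1 : ℝ) := by
          refine intervalIntegral.integral_mono_ae_restrict hab.le
            (hB.intervalIntegrable_energy hγ.continuous hwm hwb a b) (by simp) ?_
          rw [Filter.EventuallyLE, MeasureTheory.ae_restrict_iff' measurableSet_Icc]
          have hb : ∀ᵐ t : ℝ, t ≠ b := by simp [MeasureTheory.ae_iff]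
          have ha : ∀ᵐ t : ℝ, t ≠ a := by simp [MeasureTheory.ae_iff]
          filter_upwards [hγ.ae_differentiableAt_real, ha, hb] with t h1 h2 h3 h4
          exact hB.speed_le_one hiso ⟨lt_of_le_of_ne h4.1 h2.symm, lt_of_le_of_ne h4.2 h3⟩ h1
      _ = b - a := by simp
  -- the derivative of the integrand, as a continuous function of position, velocity, variation
  set Φ : En n × En n × En n × En n → ℝ := fun p =>
    fderiv ℝ B p.1 p.2.2.1 p.2.1 p.2.1 + B p.1 p.2.2.2 p.2.1 + B p.1 p.2.1 p.2.2.2 with hΦ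
  have hΦc : Continuous Φ := by
    have h1 : Continuous (fun p : En n × En n × En n × En n => fderiv ℝ B p.1 p.2.2.1 p.2.1 p.2.1) :=
      hB.contDiff_fderiv.continuous.comp (g := fun p : En n × En n × En n × En n =>
        fderiv ℝ B p.1 p.2.1 p.2.2.1 p.2.2.2)
        (f := fun p : En n × En n × En n × En n => (p.1, p.2.2.1, p.2.1, p.2.1)) (by fun_prop)
    have h2 := hB.continuous
    have h3 : Continuous (fun p : En n × En n × En n × En n => B p.1 p.2.2.2 p.2.1) :=
      ((h2.comp continuous_fst).clm_apply (by fun_prop)).clm_apply (by fun_prop)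
    have h4 : Continuous (fun p : En n × En n × En n × En n => B p.1 p.2.1 p.2.2.2) :=
      ((h2.comp continuous_fst).clm_apply (by fun_prop)).clm_apply (by fun_prop)
    exact (h1.add h3).add h4
  obtain ⟨R, hR⟩ : ∃ R, ∀ t ∈ Icc a b, ‖γ t‖ ≤ R :=
    isCompact_Icc.exists_bound_of_continuousOn hγ.continuous.continuousOn
  obtain ⟨R', hR'⟩ : ∃ R', ∀ t ∈ Icc a b, ‖V t‖ ≤ R' :=
    isCompact_Icc.exists_bound_of_continuousOn hVc.continuousOn
  obtain ⟨D, hD⟩ := ((isCompact_closedBall (0 : En n) (R + R')).prod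
    ((isCompact_closedBall (0 : En n) (C + M)).prod ((isCompact_closedBall (0 : En n) R').prod
      (isCompact_closedBall (0 : En n) M)))).exists_bound_of_continuousOn hΦc.continuousOn
  have hIoc : uIoc a b = Ioc a b := uIoc_of_le hab.le
  have hder := intervalIntegral.hasDerivAt_integral_of_dominated_loc_of_deriv_le
    (μ := MeasureTheory.volume) (a := a) (b := b) (x₀ := (0 : ℝ)) (s := Ioo (-1) 1)
    (bound := fun _ => D)
    (F := fun ε t => B (γ t + ε • V t) (w t + ε • ψ t) (w t + ε • ψ t))
    (F' := fun ε t => Φ (γ t + ε • V t, w t + ε • ψ t, V t, ψ t))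
    (Ioo_mem_nhds (by norm_num) (by norm_num))
    (Eventually.of_forall fun ε => (hB.measurable_energy
      (hγ.continuous.add (hVc.const_smul ε)) (hwm.add (hψ.const_smul ε))).aestronglyMeasurable)
    (by simpa using hB.intervalIntegrable_energy hγ.continuous hwm hwb a b)
    (by
      simp only [zero_smul, add_zero]
      exact (hΦc.measurable.comp (hγ.continuous.measurable.prodMk (hwm.prodMk
        (hVc.measurable.prodMk hψ)))).aestronglyMeasurable)
    (by
      refine Eventually.of_forall fun t ht ε hε => hD _ ?_
      rw [hIoc] at ht
      have ht' := Ioc_subset_Icc_self ht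
      have hε' : |ε| ≤ 1 := (abs_lt.2 hε).le
      have key : ∀ u v : En n, ‖u + ε • v‖ ≤ ‖u‖ + ‖v‖ := fun u v => by
        refine (norm_add_le _ _).trans ?_
        rw [norm_smul, Real.norm_eq_abs]
        have := mul_le_mul_of_nonneg_right hε' (norm_nonneg v)
        linarith
      simp only [mem_prod, mem_closedBall_zero_iff]
      exact ⟨(key _ _).trans (add_le_add (hR t ht') (hR' t ht')),
        (key _ _).trans (add_le_add (hwb t) (hM t)), hR' t ht', hM t⟩)
    (by simp)
    (by
      refine Eventually.of_forall fun t _ ε _ => ?_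
      have h1 : HasDerivAt (fun ε : ℝ => γ t + ε • V t) (V t) ε := by
        simpa using ((hasDerivAt_id ε).smul_const (V t)).const_add (γ t)
      have h2 : HasDerivAt (fun ε : ℝ => w t + ε • ψ t) (ψ t) ε := by
        simpa using ((hasDerivAt_id ε).smul_const (ψ t)).const_add (w t)
      have h3 : HasDerivAt (fun ε : ℝ => B (γ t + ε • V t))
          (fderiv ℝ B (γ t + ε • V t) (V t)) ε :=
        ((hB.contDiff.differentiable (by norm_num) _).hasFDerivAt).comp_hasDerivAt ε h1
      have h4 := (h3.clm_apply h2).clm_apply h2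
      simpa [hΦ] using h4)
  have hmin : IsLocalMin J 0 := Eventually.of_forall fun ε => hJ0.trans (hJge ε)
  have h0 := hmin.hasDerivAt_eq_zero hder.2
  have : ∀ t, B.force (γ t) (w t) (V t) + B (γ t) (w t) (ψ t)
      = (1 / 2) * Φ (γ t + (0 : ℝ) • V t, w t + (0 : ℝ) • ψ t, V t, ψ t) := by
    intro t
    simp only [hΦ, zero_smul, add_zero, BForm.force_apply, hB.symm (γ t) (ψ t) (w t)]
    ring
  refine (intervalIntegral.integral_congr fun t _ => this t).trans ?_
  rw [intervalIntegral.integral_const_mul, h0, mul_zero]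

/-- The energy of an isometric curve is at least the length of its interval; together with
`speed_le_one` this makes the speed equal to one almost everywhere. -/
lemma energy_ge (hB : NiceMetric B k K) {γ : ℝ → En n} {a b : ℝ} (hab : a < b)
    {C : NNReal} (hγ : LipschitzWith C γ)
    (hiso : ∀ s ∈ Icc a b, ∀ u ∈ Icc a b, rdist B.toMetric (γ s) (γ u) = |s - u|) :
    b - a ≤ ∫ t in a..b, B (γ t) (deriv γ t) (deriv γ t) := by
  have h := hB.rdist_le_energy hab (γ a) (measurable_deriv γ) (M := C)
    (fun t => norm_deriv_le_of_lipschitz hγ)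
  simp only [hγ.integral_deriv_eq_sub_vec, add_sub_cancel] at h
  rw [hiso a (left_mem_Icc.2 hab.le) b (right_mem_Icc.2 hab.le),
      abs_sub_comm, abs_of_pos (sub_pos.2 hab)] at h
  linarith

end NiceMetric

/-! ### The du Bois-Reymond lemma and the Legendre transform -/

/-- The du Bois-Reymond lemma: if `∫ (f ∫φ + h φ) = 0` for all bounded `φ` of mean zero, then `h`
is almost everywhere a primitive of `f`. -/
lemma duBoisReymond {f h : ℝ → ℝ} {a b Mf Mh : ℝ} (hab : a < b) (hfm : Measurable f)
    (hhm : Measurable h) (hf : ∀ t, |f t| ≤ Mf) (hh : ∀ t, |h t| ≤ Mh)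
    (hcrit : ∀ φ : ℝ → ℝ, Measurable φ → (∃ M, ∀ t, |φ t| ≤ M) → ∫ t in a..b, φ t = 0 →
      ∫ t in a..b, (f t * (∫ s in a..t, φ s) + h t * φ t) = 0) :
    ∃ c : ℝ, ∀ᵐ t : ℝ, t ∈ Ioc a b → h t = c + ∫ s in a..t, f s := by
  have hba : 0 < b - a := sub_pos.2 hab
  have hfi : ∀ c d, IntervalIntegrable f MeasureTheory.volume c d := fun c d =>
    intervalIntegrable_of_bdd hfm.aestronglyMeasurable hf
  have hhi : ∀ c d, IntervalIntegrable h MeasureTheory.volume c d := fun c d =>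
    intervalIntegrable_of_bdd hhm.aestronglyMeasurable hh
  set P : ℝ → ℝ := fun t => ∫ s in a..t, f s with hP
  have hPc : Continuous P := (lipschitzWith_integral a hfm.aestronglyMeasurable hf).continuous
  set c : ℝ := (b - a)⁻¹ * ∫ t in a..b, (h t - P t) with hc
  obtain ⟨D, hD⟩ := isCompact_Icc.exists_bound_of_continuousOn (s := Icc a b) hPc.continuousOn
  have hD0 : 0 ≤ D := (norm_nonneg _).trans (hD a (left_mem_Icc.2 hab.le))
  have hMh : 0 ≤ Mh := (abs_nonneg _).trans (hh 0)
  set φ : ℝ → ℝ := (Icc a b).indicator fun t => h t - P t - c with hφ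
  have hφm : Measurable φ := ((hhm.sub hPc.measurable).sub_const c).indicator measurableSet_Icc
  have hφb : ∀ t, |φ t| ≤ Mh + D + |c| := by
    intro t
    by_cases ht : t ∈ Icc a b
    · rw [hφ, indicator_of_mem ht]
      have h1 := hD t ht
      rw [Real.norm_eq_abs] at h1
      have h2 := hh t
      exact (abs_sub _ _).trans (add_le_add ((abs_sub _ _).trans (add_le_add h2 h1)) le_rfl)
    · rw [hφ, indicator_of_notMem ht, abs_zero]
      positivity
  have hφi : ∀ c d, IntervalIntegrable φ MeasureTheory.volume c d := fun c d =>
    intervalIntegrable_of_bdd hφm.aestronglyMeasurable hφb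
  have hφe : ∀ t ∈ Icc a b, φ t = h t - P t - c := fun t ht => by rw [hφ, indicator_of_mem ht]
  have hPi : IntervalIntegrable P MeasureTheory.volume a b := hPc.intervalIntegrable a b
  have hφ0 : ∫ t in a..b, φ t = 0 := by
    rw [intervalIntegral.integral_congr (g := fun t => h t - P t - c) fun t ht => hφe t
      (by rwa [uIcc_of_le hab.le] at ht)]
    rw [intervalIntegral.integral_sub ((hhi a b).sub hPi) (by simp),
      intervalIntegral.integral_const, hc, smul_eq_mul, ← mul_assoc, mul_inv_cancel₀ hba.ne',
      one_mul, sub_self]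
  have h1 := hcrit φ hφm ⟨_, hφb⟩ hφ0
  have h2 := integral_primitive_mul (hfi a b) (hφi a b)
  set V : ℝ → ℝ := fun t => ∫ s in a..t, φ s with hV
  have hVc : Continuous V := (lipschitzWith_integral a hφm.aestronglyMeasurable hφb).continuous
  have hfV : IntervalIntegrable (fun t => f t * V t) MeasureTheory.volume a b :=
    (hfi a b).mul_continuousOn hVc.continuousOn
  have hhφ : IntervalIntegrable (fun t => h t * φ t) MeasureTheory.volume a b :=
    intervalIntegrable_of_bdd (hhm.mul hφm).aestronglyMeasurable (M := Mh * (Mh + D + |c|))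
      fun t => by
        rw [Real.norm_eq_abs, abs_mul]
        have := hh t
        have := hφb t
        gcongr
  have hPφ : IntervalIntegrable (fun t => P t * φ t) MeasureTheory.volume a b :=
    (hφi a b).continuousOn_mul hPc.continuousOn
  have h1' : (∫ t in a..b, f t * V t) + ∫ t in a..b, h t * φ t = 0 := by
    rw [← intervalIntegral.integral_add hfV hhφ]; exact h1
  have h2' : ∫ t in a..b, P t * φ t = - ∫ t in a..b, f t * V t := by
    refine h2.trans ?_
    rw [hφ0, mul_zero, zero_sub]
  have h3 : ∫ t in a..b, φ t * φ t = 0 := by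
    rw [intervalIntegral.integral_congr (g := fun t => h t * φ t - P t * φ t - c * φ t) fun t ht => by
      have := hφe t (by rwa [uIcc_of_le hab.le] at ht)
      simp only
      nth_rewrite 1 [this]
      ring]
    rw [intervalIntegral.integral_sub (hhφ.sub hPφ) ((hφi a b).const_mul c),
      intervalIntegral.integral_sub hhφ hPφ, intervalIntegral.integral_const_mul, hφ0, h2']
    linarith
  have hφφ : IntervalIntegrable (fun t => φ t * φ t) MeasureTheory.volume a b :=
    intervalIntegrable_of_bdd (hφm.mul hφm).aestronglyMeasurable
      (M := (Mh + D + |c|) * (Mh + D + |c|)) fun t => by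
        rw [Real.norm_eq_abs, abs_mul]
        have := hφb t
        gcongr
  rw [intervalIntegral.integral_eq_zero_iff_of_le_of_nonneg_ae hab.le
    (Eventually.of_forall fun t => mul_self_nonneg _) hφφ, Filter.EventuallyEq,
    MeasureTheory.ae_restrict_iff' measurableSet_Ioc] at h3
  refine ⟨c, ?_⟩
  filter_upwards [h3] with t ht hm
  have h4 := mul_self_eq_zero.1 (ht hm)
  rw [hφe t (Ioc_subset_Icc_self hm)] at h4
  simp only [hP] at h4
  linarith

namespace NiceMetric

variable {n : ℕ} {B : BForm n} {k K : ℝ}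

lemma isInvertible (hB : NiceMetric B k K) (x : En n) : (B x).IsInvertible := by
  have hinj : Function.Injective (B x).toLinearMap := by
    rw [← LinearMap.ker_eq_bot, LinearMap.ker_eq_bot']
    intro v hv
    have h1 := hB.lower x v
    have h2 : B x v = 0 := hv
    rw [h2] at h1
    have h3 : k * ‖v‖ = 0 := by
      have : (k * ‖v‖) ^ 2 ≤ 0 := by simpa using h1
      nlinarith [sq_nonneg (k * ‖v‖)]
    rcases mul_eq_zero.1 h3 with h | h
    · exact absurd h hB.k_pos.ne'
    · exact norm_eq_zero.1 h
  have hfr : Module.finrank ℝ (En n) = Module.finrank ℝ (En n →L[ℝ] ℝ) :=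
    (InnerProductSpace.toDual ℝ (En n)).toLinearEquiv.finrank_eq
  refine ⟨(LinearEquiv.ofInjectiveOfFinrankEq (B x).toLinearMap hinj hfr).toContinuousLinearEquiv, ?_⟩
  ext v w
  rfl

/-- The velocity with momentum `P` at the point `x`. -/
noncomputable def _root_.BForm.vel (B : BForm n) (x : En n) (P : En n →L[ℝ] ℝ) : En n :=
  (B x).inverse P

lemma vel_apply (hB : NiceMetric B k K) (x v : En n) : B.vel x (B x v) = v := by
  obtain ⟨e, he⟩ := hB.isInvertible x
  simp [BForm.vel, ← he]

lemma apply_vel (hB : NiceMetric B k K) (x : En n) (P : En n →L[ℝ] ℝ) : B x (B.vel x P) = P := by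
  obtain ⟨e, he⟩ := hB.isInvertible x
  simp [BForm.vel, ← he]

lemma contDiff_vel (hB : NiceMetric B k K) :
    ContDiff ℝ 1 (fun p : En n × (En n →L[ℝ] ℝ) => B.vel p.1 p.2) := by
  have h : ContDiff ℝ 1 (fun x => (B x).inverse) := by
    rw [contDiff_iff_contDiffAt]
    intro x
    exact (hB.isInvertible x).contDiffAt_map_inverse.comp x
      (hB.contDiff.contDiffAt.of_le (by norm_num))
  exact (h.comp contDiff_fst).clm_apply contDiff_snd

end NiceMetric

/-! ### Regularity of isometric curves -/

lemma measurable_comp₂ {n : ℕ} {f : En n × En n → ℝ}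
    (hf : Continuous f) {x v : ℝ → En n} (hx : Measurable x) (hv : Measurable v) :
    Measurable (fun t => f (x t, v t)) :=
  hf.measurable.comp (hx.prodMk hv)

lemma aestronglyMeasurable_comp₂ {n : ℕ} {G : Type*} [NormedAddCommGroup G] {f : En n × En n → G}
    (hf : Continuous f) {x v : ℝ → En n} (hx : Measurable x) (hv : Measurable v) :
    MeasureTheory.AEStronglyMeasurable (fun t => f (x t, v t)) MeasureTheory.volume :=
  hf.comp_aestronglyMeasurable (hx.prodMk hv).aestronglyMeasurable

lemma exists_bound_of_continuous {E F G : Type*} [NormedAddCommGroup E] [ProperSpace E]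
    [NormedAddCommGroup F] [ProperSpace F] [NormedAddCommGroup G] {f : E × F → G}
    (hf : Continuous f) (R C : ℝ) : ∃ M, ∀ x v, ‖x‖ ≤ R → ‖v‖ ≤ C → ‖f (x, v)‖ ≤ M := by
  obtain ⟨M, hM⟩ := ((isCompact_closedBall (0 : E) R).prod
    (isCompact_closedBall (0 : F) C)).exists_bound_of_continuousOn hf.continuousOn
  exact ⟨M, fun x v hx hv => hM _ ⟨by simpa using hx, by simpa using hv⟩⟩

namespace NiceMetric

variable {n : ℕ} {B : BForm n} {k K : ℝ}

/-- Along an isometric curve each component of the momentum agrees almost everywhere with a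
primitive of the force. -/
lemma momentum_ae (hB : NiceMetric B k K) {γ : ℝ → En n} {a b : ℝ} (hab : a < b)
    {C : NNReal} (hγ : LipschitzWith C γ) {R : ℝ} (hR : ∀ t, ‖γ t‖ ≤ R)
    (hiso : ∀ s ∈ Icc a b, ∀ u ∈ Icc a b, rdist B.toMetric (γ s) (γ u) = |s - u|) (e : En n) :
    ∃ c : ℝ, ∀ᵐ t : ℝ, t ∈ Ioc a b →
      B (γ t) (deriv γ t) e = c + ∫ s in a..t, B.force (γ s) (deriv γ s) e := by
  have hwm : Measurable (deriv γ) := measurable_deriv γ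
  have hwb : ∀ t, ‖deriv γ t‖ ≤ C := fun t => norm_deriv_le_of_lipschitz hγ
  have hfec : Continuous (fun p : En n × En n => B.force p.1 p.2 e) :=
    hB.contDiff_force.continuous.clm_apply continuous_const
  have hqec : Continuous (fun p : En n × En n => B p.1 p.2 e) :=
    ((hB.continuous.comp continuous_fst).clm_apply continuous_snd).clm_apply continuous_const
  obtain ⟨Mf, hMf⟩ := exists_bound_of_continuous hfec R C
  obtain ⟨Mq, hMq⟩ := exists_bound_of_continuous hqec R C
  have hfb : ∀ t, |B.force (γ t) (deriv γ t) e| ≤ Mf := fun t => by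
    simpa using hMf (γ t) (deriv γ t) (hR t) (hwb t)
  have hqb : ∀ t, |B (γ t) (deriv γ t) e| ≤ Mq := fun t => by
    simpa using hMq (γ t) (deriv γ t) (hR t) (hwb t)
  have hfm : Measurable (fun t => B.force (γ t) (deriv γ t) e) :=
    measurable_comp₂ hfec hγ.continuous.measurable hwm
  have hqm : Measurable (fun t => B (γ t) (deriv γ t) e) :=
    measurable_comp₂ hqec hγ.continuous.measurable hwm
  refine duBoisReymond hab hfm hqm hfb hqb ?_
  rintro φ hφm ⟨M, hM⟩ hφ0
  have h := hB.first_variation hab hγ hiso (ψ := fun t => φ t • e) (hφm.smul_const e)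
    (M := M * ‖e‖) (fun t => by
      rw [norm_smul, Real.norm_eq_abs]
      have := hM t
      gcongr) (by rw [intervalIntegral.integral_smul_const, hφ0, zero_smul])
  simp only [intervalIntegral.integral_smul_const, map_smul, smul_eq_mul] at h
  rw [← h]
  refine intervalIntegral.integral_congr fun t _ => ?_
  ring

/-- Regularity of a globally Lipschitz and bounded curve which is isometric on `[a, b]`: the
primitive of the force is a continuous momentum, and the velocity it determines is the derivative
of the curve at every point. -/
lemma regularity_aux (hB : NiceMetric B k K) {γ : ℝ → En n} {a b : ℝ} (hab : a < b)
    {C : NNReal} (hγ : LipschitzWith C γ) {R : ℝ} (hR : ∀ t, ‖γ t‖ ≤ R)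
    (hiso : ∀ s ∈ Icc a b, ∀ u ∈ Icc a b, rdist B.toMetric (γ s) (γ u) = |s - u|) :
    ∃ η : ℝ → En n, ∀ t ∈ Icc a b, HasDerivWithinAt γ (η t) (Icc a b) t ∧
      HasDerivWithinAt (fun s => B (γ s) (η s)) (B.force (γ t) (η t)) (Icc a b) t ∧
      B (γ t) (η t) (η t) = 1 := by
  have hwm : Measurable (deriv γ) := measurable_deriv γ
  have hwb : ∀ t, ‖deriv γ t‖ ≤ C := fun t => norm_deriv_le_of_lipschitz hγ
  have hqc : Continuous (fun p : En n × En n => B p.1 p.2) :=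
    (hB.continuous.comp continuous_fst).clm_apply continuous_snd
  have hfc : Continuous (fun p : En n × En n => B.force p.1 p.2) := hB.contDiff_force.continuous
  obtain ⟨Mf, hMf⟩ := exists_bound_of_continuous hfc R C
  obtain ⟨w, hw⟩ : ∃ w, w = deriv γ := ⟨_, rfl⟩
  obtain ⟨f, hf⟩ : ∃ f : ℝ → En n →L[ℝ] ℝ, ∀ t, f t = B.force (γ t) (w t) := ⟨_, fun _ => rfl⟩
  have hfb : ∀ t, ‖f t‖ ≤ Mf := fun t => by
    rw [hf, hw]
    exact hMf _ _ (hR t) (hwb t)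
  have hfm : MeasureTheory.AEStronglyMeasurable f MeasureTheory.volume := by
    rw [funext hf, hw]
    exact aestronglyMeasurable_comp₂ hfc hγ.continuous.measurable hwm
  have hfi : ∀ c d, IntervalIntegrable f MeasureTheory.volume c d := fun c d =>
    intervalIntegrable_of_bdd hfm hfb
  have hdbr : ∀ e : En n, ∃ c : ℝ, ∀ᵐ t : ℝ, t ∈ Ioc a b →
      B (γ t) (w t) e = c + ∫ s in a..t, f s e := by
    simp only [hf, hw]
    exact hB.momentum_ae hab hγ hR hiso
  choose c hc using fun i : Fin n => hdbr (EuclideanSpace.single i 1)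
  set c₀ : En n →L[ℝ] ℝ := ∑ i, c i • EuclideanSpace.proj i with hc₀
  have hc₀i : ∀ i, c₀ (EuclideanSpace.single i 1) = c i := by
    intro i
    simp [hc₀]
  set P : ℝ → En n →L[ℝ] ℝ := fun t => c₀ + ∫ s in a..t, f s with hP
  have hPc : Continuous P :=
    continuous_const.add (lipschitzWith_integral a hfm hfb).continuous
  have hPae : ∀ᵐ t : ℝ, t ∈ Ioc a b → B (γ t) (w t) = P t := by
    filter_upwards [MeasureTheory.ae_all_iff.2 hc] with t ht hm
    refine ContinuousLinearMap.coe_injective ((EuclideanSpace.basisFun (Fin n) ℝ).toBasis.ext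
      fun i => ?_)
    simp only [OrthonormalBasis.coe_toBasis, EuclideanSpace.basisFun_apply,
      ContinuousLinearMap.coe_coe, hP, add_apply, hc₀i, ht i hm]
    rw [ContinuousLinearMap.intervalIntegral_apply (hfi a t)]
  have hvc : Continuous (fun p : En n × (En n →L[ℝ] ℝ) => B.vel p.1 p.2) :=
    hB.contDiff_vel.continuous
  set η : ℝ → En n := fun t => B.vel (γ t) (P t) with hη
  have hηc : Continuous η := hvc.comp₂ hγ.continuous hPc
  have hwη : ∀ᵐ t : ℝ, t ∈ Ioc a b → w t = η t := by
    filter_upwards [hPae] with t ht hm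
    simp only [hη, ← ht hm, hB.vel_apply]
  have hγη : ∀ t ∈ Icc a b, γ t = γ a + ∫ s in a..t, η s := by
    intro t ht
    have h1 := hγ.integral_deriv_eq_sub_vec a t
    have h2 : ∫ s in a..t, w s = ∫ s in a..t, η s := by
      refine intervalIntegral.integral_congr_ae ?_
      filter_upwards [hwη] with s hs hm
      rw [uIoc_of_le ht.1] at hm
      exact hs ⟨hm.1, hm.2.trans ht.2⟩
    rw [← h2, hw, h1]; abel
  have hfηc : Continuous fun t => B.force (γ t) (η t) := hfc.comp₂ hγ.continuous hηc
  have hPη : ∀ t ∈ Icc a b, P t = c₀ + ∫ s in a..t, B.force (γ s) (η s) := by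
    intro t ht
    have h2 : ∫ s in a..t, f s = ∫ s in a..t, B.force (γ s) (η s) := by
      refine intervalIntegral.integral_congr_ae ?_
      filter_upwards [hwη] with s hs hm
      rw [uIoc_of_le ht.1] at hm
      rw [hf, hs ⟨hm.1, hm.2.trans ht.2⟩]
    simp only [hP, h2]
  have hd1 : ∀ t ∈ Icc a b, HasDerivWithinAt γ (η t) (Icc a b) t := fun t ht =>
    (((hηc.integral_hasStrictDerivAt a t).hasDerivAt.const_add (γ a)).hasDerivWithinAt).congr
      hγη (hγη t ht)
  have hle : ∀ t ∈ Icc a b, B (γ t) (η t) (η t) ≤ 1 := by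
    have hcl : IsClosed {t | B (γ t) (η t) (η t) ≤ 1} :=
      isClosed_le ((hqc.comp₂ hγ.continuous hηc).clm_apply hηc) continuous_const
    have hsub : Ioo a b ⊆ {t | B (γ t) (η t) (η t) ≤ 1} := by
      intro t ht
      have h1 : HasDerivAt γ (η t) t :=
        (hd1 t (Ioo_subset_Icc_self ht)).hasDerivAt (Icc_mem_nhds ht.1 ht.2)
      have := hB.speed_le_one hiso ht h1.differentiableAt
      rwa [h1.deriv] at this
    have h2 := closure_minimal hsub hcl
    rw [closure_Ioo hab.ne] at h2
    exact fun t ht => h2 ht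
  refine ⟨η, fun t ht => ⟨hd1 t ht, ?_, ?_⟩⟩
  · have h1 : (fun s => B (γ s) (η s)) = P := funext fun s => hB.apply_vel _ _
    rw [h1]
    exact (((hfηc.integral_hasStrictDerivAt a t).hasDerivAt.const_add c₀).hasDerivWithinAt).congr
      hPη (hPη t ht)
  · by_contra hne
    have hNc : Continuous fun t => B (γ t) (η t) (η t) :=
      (hqc.comp₂ hγ.continuous hηc).clm_apply hηc
    have hlt := intervalIntegral.integral_pos (f := fun t => 1 - B (γ t) (η t) (η t)) hab
      (continuous_const.sub hNc).continuousOn (fun s hs => sub_nonneg.2 (hle s (Ioc_subset_Icc_self hs)))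
      ⟨t, ht, sub_pos.2 (lt_of_le_of_ne (hle t ht) hne)⟩
    rw [intervalIntegral.integral_sub (by simp) (hNc.intervalIntegrable a b)] at hlt
    have hge := hB.energy_ge hab hγ hiso
    have h2 : ∫ s in a..b, B (γ s) (deriv γ s) (deriv γ s) = ∫ s in a..b, B (γ s) (η s) (η s) := by
      refine intervalIntegral.integral_congr_ae ?_
      filter_upwards [hwη] with s hs hm
      rw [uIoc_of_le hab.le] at hm
      rw [← hs hm, hw]
    simp only [intervalIntegral.integral_const, smul_eq_mul, mul_one] at hlt
    linarith

/-- Regularity of isometric curves: they are `C¹`, satisfy the geodesic equation (in momentum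
form) and have unit speed. -/
lemma regularity (hB : NiceMetric B k K) {γ : ℝ → En n} {a b : ℝ} (hab : a < b)
    (hiso : ∀ s ∈ Icc a b, ∀ u ∈ Icc a b, rdist B.toMetric (γ s) (γ u) = |s - u|) :
    ∃ η : ℝ → En n, ∀ t ∈ Icc a b, HasDerivWithinAt γ (η t) (Icc a b) t ∧
      HasDerivWithinAt (fun s => B (γ s) (η s)) (B.force (γ t) (η t)) (Icc a b) t ∧
      B (γ t) (η t) (η t) = 1 := by
  have hk := hB.k_pos
  set pr : ℝ → ℝ := fun t => projIcc a b hab.le t with hpr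
  have hprm : ∀ t, pr t ∈ Icc a b := fun t => (projIcc a b hab.le t).2
  have hpre : ∀ t ∈ Icc a b, pr t = t := fun t ht => by simp [hpr, projIcc_of_mem hab.le ht]
  set σ : ℝ → En n := fun t => γ (pr t) with hσ
  have hσe : ∀ t ∈ Icc a b, σ t = γ t := fun t ht => by simp only [hσ, hpre t ht]
  have hprL : ∀ s t, |pr s - pr t| ≤ |s - t| := fun s t => by
    have := (LipschitzWith.projIcc hab.le).dist_le_mul s t
    simpa [Subtype.dist_eq, Real.dist_eq] using this
  have hLip : LipschitzWith (1 / k).toNNReal σ := by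
    refine LipschitzWith.of_dist_le_mul fun s t => ?_
    rw [Real.coe_toNNReal _ (by positivity), dist_eq_norm, Real.dist_eq]
    have h1 := hB.le_rdist (σ t) (σ s)
    rw [hiso _ (hprm t) _ (hprm s), abs_sub_comm] at h1
    have h2 := h1.trans (hprL s t)
    rw [mul_comm, ← le_div_iff₀ hk] at h2
    refine h2.trans (le_of_eq (by ring))
  obtain ⟨R, hR⟩ := isCompact_Icc.exists_bound_of_continuousOn (s := Icc a b)
    hLip.continuous.continuousOn
  obtain ⟨η, h⟩ := hB.regularity_aux hab hLip (R := R) (fun t => by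
      have h1 := hR _ (hprm t)
      rw [hσe _ (hprm t)] at h1
      exact h1) (fun s hs u hu => by rw [hσe s hs, hσe u hu, hiso s hs u hu])
  refine ⟨η, fun t ht => ?_⟩
  obtain ⟨h1, h2, h3⟩ := h t ht
  rw [hσe t ht] at h2 h3
  exact ⟨h1.congr (fun s hs => (hσe s hs).symm) (hσe t ht).symm,
    h2.congr (fun s hs => by rw [hσe s hs]) (by rw [hσe t ht]), h3⟩

end NiceMetric

/-! ### The geodesic flow -/

/-- A unit speed curve on `[0, ∞)` with velocity `η` solving the geodesic equation, written for the
momentum `B(γ)(η)`. -/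
structure IsRay {n : ℕ} (B : BForm n) (γ η : ℝ → En n) : Prop where
  deriv_pos : ∀ t, 0 ≤ t → HasDerivWithinAt γ (η t) (Ici 0) t
  deriv_mom : ∀ t, 0 ≤ t → HasDerivWithinAt (fun s => B (γ s) (η s)) (B.force (γ t) (η t)) (Ici 0) t
  unit : ∀ t, 0 ≤ t → B (γ t) (η t) (η t) = 1

namespace NiceMetric

variable {n : ℕ} {B : BForm n} {k K : ℝ}

/-- Geodesic rays in the metric sense solve the geodesic equation. -/
lemma isRay_of_isGeodesicOn (hB : NiceMetric B k K) {γ : ℝ → En n}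
    (h : IsGeodesicOn (rdist B.toMetric) γ 1 (Ici 0)) : IsRay B γ (derivWithin γ (Ici 0)) := by
  have key : ∀ t : ℝ, 0 ≤ t → ∃ η : ℝ → En n, (∀ᶠ s in nhdsWithin t (Ici 0),
      derivWithin γ (Ici 0) s = η s) ∧ HasDerivWithinAt γ (η t) (Ici 0) t ∧
      HasDerivWithinAt (fun s => B (γ s) (η s)) (B.force (γ t) (η t)) (Ici 0) t ∧
      B (γ t) (η t) (η t) = 1 := by
    intro t ht
    obtain ⟨δ, hδ, hiso⟩ := h t ht
    have hab : max 0 (t - δ / 2) < t + δ / 2 := max_lt (by linarith) (by linarith)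
    obtain ⟨η, hη⟩ := hB.regularity (γ := γ) hab (fun s hs u hu => by
      have hs1 := max_le_iff.1 hs.1
      have hu1 := max_le_iff.1 hu.1
      rw [hiso s hs1.1 u hu1.1 (by rw [abs_lt]; constructor <;> linarith [hs.2])
        (by rw [abs_lt]; constructor <;> linarith [hu.2]), one_mul])
    have hmem : ∀ s ∈ Ici (0 : ℝ), s ∈ Ioo (t - δ / 2) (t + δ / 2) →
        Icc (max 0 (t - δ / 2)) (t + δ / 2) ∈ nhdsWithin s (Ici 0) := by
      intro s hs0 hs
      filter_upwards [self_mem_nhdsWithin, mem_nhdsWithin_of_mem_nhds (Ioo_mem_nhds hs.1 hs.2)]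
        with u hu0 hu
      exact ⟨max_le hu0 hu.1.le, hu.2.le⟩
    have htm : t ∈ Ioo (t - δ / 2) (t + δ / 2) := ⟨by linarith, by linarith⟩
    have htI := mem_of_mem_nhdsWithin (show t ∈ Ici (0 : ℝ) from ht) (hmem t ht htm)
    obtain ⟨h1, h2, h3⟩ := hη t htI
    refine ⟨η, ?_, h1.mono_of_mem_nhdsWithin (hmem t ht htm),
      h2.mono_of_mem_nhdsWithin (hmem t ht htm), h3⟩
    filter_upwards [self_mem_nhdsWithin, mem_nhdsWithin_of_mem_nhds (Ioo_mem_nhds htm.1 htm.2)]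
      with s hs0 hs
    have hsI := mem_of_mem_nhdsWithin hs0 (hmem s hs0 hs)
    exact ((hη s hsI).1.mono_of_mem_nhdsWithin (hmem s hs0 hs)).derivWithin
      (uniqueDiffOn_Ici 0 s hs0)
  refine ⟨fun t ht => ?_, fun t ht => ?_, fun t ht => ?_⟩ <;>
    obtain ⟨η, he, h1, h2, h3⟩ := key t ht <;>
    have he0 := mem_of_mem_nhdsWithin (show t ∈ Ici (0 : ℝ) from ht) he
  · rw [show derivWithin γ (Ici 0) t = η t from he0]; exact h1
  · rw [show derivWithin γ (Ici 0) t = η t from he0]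
    refine h2.congr_of_eventuallyEq ?_ (by rw [show derivWithin γ (Ici 0) t = η t from he0])
    filter_upwards [he] with s hs
    rw [hs]
  · rw [show derivWithin γ (Ici 0) t = η t from he0]; exact h3

lemma norm_vel_le (hB : NiceMetric B k K) {x v : En n} (h : B x v v = 1) : ‖v‖ ≤ 1 / k := by
  have := hB.lower_sqrt x v
  rw [h, Real.sqrt_one, mul_comm] at this
  rwa [le_div_iff₀ hB.k_pos]

lemma norm_mom_le (hB : NiceMetric B k K) {x v : En n} (h : B x v v = 1) : ‖B x v‖ ≤ K := by
  refine ContinuousLinearMap.opNorm_le_bound _ hB.K_pos.le fun w => ?_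
  have h1 : ∀ w, B x v w ≤ K * ‖w‖ := fun w => by
    have := hB.cauchy x v w
    rw [h, Real.sqrt_one, one_mul] at this
    exact this.trans (hB.upper_sqrt x w)
  rw [Real.norm_eq_abs, abs_le]
  have h2 := h1 (-w)
  rw [map_neg, norm_neg] at h2
  exact ⟨by linarith, h1 w⟩

lemma norm_ray_sub_le (hB : NiceMetric B k K) {γ η : ℝ → En n} (h : IsRay B γ η) {t : ℝ}
    (ht : 0 ≤ t) : ‖γ t - γ 0‖ ≤ 1 / k * t := by
  have := (convex_Ici (0 : ℝ)).norm_image_sub_le_of_norm_hasDerivWithin_le (f := γ) (f' := η)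
    (C := 1 / k) (fun s hs => h.deriv_pos s hs) (fun s hs => hB.norm_vel_le (h.unit s hs))
    (x := 0) (y := t) (by simp) ht
  simpa [abs_of_nonneg ht] using this

/-- The geodesic vector field on phase space. -/
noncomputable def _root_.BForm.field (B : BForm n) (z : En n × (En n →L[ℝ] ℝ)) :
    En n × (En n →L[ℝ] ℝ) := (B.vel z.1 z.2, B.force z.1 (B.vel z.1 z.2))

lemma contDiff_field (hB : NiceMetric B k K) : ContDiff ℝ 1 B.field := by
  have h := hB.contDiff_vel
  have h2 : ContDiff ℝ 1 (fun z : En n × (En n →L[ℝ] ℝ) => B.force z.1 (B.vel z.1 z.2)) :=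
    hB.contDiff_force.comp₂ contDiff_fst h
  exact h.prodMk h2

/-- Continuous dependence of rays on their initial data (Grönwall). -/
lemma exists_dependence (hB : NiceMetric B k K) (r T : ℝ) (hT : 0 ≤ T) :
    ∃ L : ℝ, ∀ γ₁ η₁ γ₂ η₂ : ℝ → En n, IsRay B γ₁ η₁ → IsRay B γ₂ η₂ → ‖γ₁ 0‖ ≤ r → ‖γ₂ 0‖ ≤ r →
      dist (γ₁ T, B (γ₁ T) (η₁ T)) (γ₂ T, B (γ₂ T) (η₂ T)) ≤
        dist (γ₁ 0, B (γ₁ 0) (η₁ 0)) (γ₂ 0, B (γ₂ 0) (η₂ 0)) * L := by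
  have hk := hB.k_pos
  obtain ⟨Λ, hΛ⟩ := (hB.contDiff_field.contDiffOn
    (s := Metric.closedBall 0 (max (r + 1 / k * T) K))).exists_lipschitzOnWith (by norm_num)
    (convex_closedBall _ _) (isCompact_closedBall _ _)
  refine ⟨Real.exp (Λ * (T - 0)), fun γ₁ η₁ γ₂ η₂ h₁ h₂ hr₁ hr₂ => ?_⟩
  have hc : ∀ γ η : ℝ → En n, IsRay B γ η →
      ContinuousOn (fun t => (γ t, B (γ t) (η t))) (Icc 0 T) := fun γ η h t ht =>
    ((h.deriv_pos t ht.1).continuousWithinAt.prodMk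
      (h.deriv_mom t ht.1).continuousWithinAt).mono Icc_subset_Ici_self
  have hd : ∀ γ η : ℝ → En n, IsRay B γ η → ∀ t ∈ Ico 0 T, HasDerivWithinAt
      (fun t => (γ t, B (γ t) (η t))) (B.field (γ t, B (γ t) (η t))) (Ici t) t := by
    intro γ η h t ht
    have := ((h.deriv_pos t ht.1).prodMk (h.deriv_mom t ht.1)).mono (Ici_subset_Ici.2 ht.1)
    simpa only [BForm.field, hB.vel_apply] using this
  have hm : ∀ γ η : ℝ → En n, IsRay B γ η → ‖γ 0‖ ≤ r → ∀ t ∈ Ico 0 T,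
      (γ t, B (γ t) (η t)) ∈ Metric.closedBall (0 : En n × (En n →L[ℝ] ℝ))
        (max (r + 1 / k * T) K) := by
    intro γ η h hr t ht
    rw [mem_closedBall_zero_iff, Prod.norm_def]
    refine max_le_max ?_ (hB.norm_mom_le (h.unit t ht.1))
    have h1 := hB.norm_ray_sub_le h ht.1
    have h2 : ‖γ t‖ ≤ ‖γ 0‖ + ‖γ t - γ 0‖ := by
      simpa using norm_add_le (γ 0) (γ t - γ 0)
    have h3 : 1 / k * t ≤ 1 / k * T := by have := ht.2.le; gcongr
    simp only
    linarith
  exact dist_le_of_trajectories_ODE_of_mem (v := fun _ => B.field) (K := Λ)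
    (s := fun _ => Metric.closedBall 0 (max (r + 1 / k * T) K)) (fun _ _ => hΛ)
    (hc _ _ h₁) (hd _ _ h₁) (hm _ _ h₁ hr₁) (hc _ _ h₂) (hd _ _ h₂) (hm _ _ h₂ hr₂) le_rfl T
    (right_mem_Icc.2 hT)

lemma ray_unique (hB : NiceMetric B k K) {γ₁ η₁ γ₂ η₂ : ℝ → En n} (h₁ : IsRay B γ₁ η₁)
    (h₂ : IsRay B γ₂ η₂) (h0 : γ₁ 0 = γ₂ 0) (h1 : η₁ 0 = η₂ 0) {t : ℝ} (ht : 0 ≤ t) :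
    γ₁ t = γ₂ t := by
  obtain ⟨L, hL⟩ := hB.exists_dependence (‖γ₂ 0‖) t ht
  have := hL γ₁ η₁ γ₂ η₂ h₁ h₂ (by rw [h0]) le_rfl
  rw [h0, h1, dist_self, zero_mul] at this
  exact (Prod.ext_iff.1 (dist_le_zero.1 this)).1

lemma ray_tendsto (hB : NiceMetric B k K) {γ η : ℕ → ℝ → En n} {σ ζ : ℝ → En n}
    (h : ∀ j, IsRay B (γ j) (η j)) (hσ : IsRay B σ ζ) {r : ℝ} (hr : ∀ j, ‖γ j 0‖ ≤ r)
    (hr' : ‖σ 0‖ ≤ r) (h0 : Tendsto (fun j => γ j 0) atTop (nhds (σ 0)))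
    (h1 : Tendsto (fun j => η j 0) atTop (nhds (ζ 0))) {t : ℝ} (ht : 0 ≤ t) :
    Tendsto (fun j => (γ j t, B (γ j t) (η j t))) atTop (nhds (σ t, B (σ t) (ζ t))) := by
  obtain ⟨L, hL⟩ := hB.exists_dependence r t ht
  have hqc : Continuous (fun p : En n × En n => (p.1, B p.1 p.2)) :=
    continuous_fst.prodMk ((hB.continuous.comp continuous_fst).clm_apply continuous_snd)
  have h2 : Tendsto (fun j => (γ j 0, B (γ j 0) (η j 0))) atTop (nhds (σ 0, B (σ 0) (ζ 0))) :=
    (hqc.tendsto (σ 0, ζ 0)).comp (h0.prodMk_nhds h1)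
  rw [tendsto_iff_dist_tendsto_zero] at h2 ⊢
  have h3 := h2.mul_const L
  rw [zero_mul] at h3
  exact squeeze_zero (fun _ => dist_nonneg) (fun j => hL _ _ _ _ (h j) hσ (hr j) hr') h3

end NiceMetric

/-! ### Escape to infinity -/

/-- Outside the ball of radius `R` the metric is `ε`-close to a cone: the radial vector is nearly
dual to the Euclidean one, and the radial derivative of the metric is small. -/
structure NearCone {n : ℕ} (B : BForm n) (ε R : ℝ) : Prop where
  radial : ∀ x, R ≤ ‖x‖ → ∀ v, |B x v x - ⟪v, x⟫| ≤ ε * ‖v‖ * ‖x‖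
  deriv : ∀ x, R ≤ ‖x‖ → ∀ v, |fderiv ℝ B x x v v| ≤ ε * ‖v‖ * ‖v‖

namespace NiceMetric

variable {n : ℕ} {B : BForm n} {k K : ℝ}

/-- Along a ray outside the ball of radius `R`, the quantity `⟨γ̇, γ⟩ - (k/4)|γ|` grows at least
linearly: `⟨γ̇, γ⟩` has derivative close to `1`, and `|γ|` has derivative at most `1/k`. -/
lemma growth (hB : NiceMetric B k K) {R : ℝ} (hC : NearCone B (k ^ 2 / 4) R) {γ η : ℝ → En n}
    (h : IsRay B γ η) {t₁ t₂ : ℝ} (h1 : 0 ≤ t₁) (h12 : t₁ ≤ t₂)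
    (hR : ∀ t ∈ Icc t₁ t₂, R ≤ ‖γ t‖) :
    B (γ t₁) (η t₁) (γ t₁) - k / 4 * ‖γ t₁‖ + (t₂ - t₁) / 4 ≤
      B (γ t₂) (η t₂) (γ t₂) - k / 4 * ‖γ t₂‖ := by
  have hk := hB.k_pos
  have hud : ∀ t, 0 ≤ t → HasDerivWithinAt (fun s => B (γ s) (η s) (γ s) - s / 2)
      (B.force (γ t) (η t) (γ t) + 1 - 1 / 2) (Ici 0) t := by
    intro t ht
    have h2 := (h.deriv_mom t ht).clm_apply (h.deriv_pos t ht)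
    rw [h.unit t ht] at h2
    exact h2.fun_sub ((hasDerivWithinAt_id t _).div_const 2)
  have hmono : MonotoneOn (fun s => B (γ s) (η s) (γ s) - s / 2) (Icc t₁ t₂) := by
    refine monotoneOn_of_hasDerivWithinAt_nonneg (convex_Icc _ _)
      (f' := fun t => B.force (γ t) (η t) (γ t) + 1 - 1 / 2)
      (fun t ht => (hud t (h1.trans ht.1)).continuousWithinAt.mono fun s hs => h1.trans hs.1)
      (fun t ht => ?_) fun t ht => ?_
    · rw [interior_Icc] at ht ⊢
      exact (hud t (h1.trans ht.1.le)).mono fun s hs => h1.trans hs.1.le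
    · rw [interior_Icc] at ht
      have h2 := hC.deriv (γ t) (hR t (Ioo_subset_Icc_self ht)) (η t)
      have h3 := hB.lower (γ t) (η t)
      rw [h.unit t (h1.trans ht.1.le)] at h3
      rw [BForm.force_apply]
      have h4 := (abs_le.1 h2).1
      nlinarith
  have h2 := hmono (left_mem_Icc.2 h12) (right_mem_Icc.2 h12) h12
  have h3 : ‖γ t₂ - γ t₁‖ ≤ 1 / k * (t₂ - t₁) := by
    have := (convex_Ici (0 : ℝ)).norm_image_sub_le_of_norm_hasDerivWithin_le (f := γ) (f' := η)
      (C := 1 / k) (fun s hs => h.deriv_pos s hs) (fun s hs => hB.norm_vel_le (h.unit s hs))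
      (x := t₁) (y := t₂) h1 (h1.trans h12)
    rwa [Real.norm_of_nonneg (sub_nonneg.2 h12)] at this
  have h4 : ‖γ t₂‖ ≤ ‖γ t₁‖ + 1 / k * (t₂ - t₁) := by
    have := norm_add_le (γ t₁) (γ t₂ - γ t₁)
    rw [add_sub_cancel] at this
    linarith
  have h5 : k / 4 * ‖γ t₂‖ ≤ k / 4 * ‖γ t₁‖ + (t₂ - t₁) / 4 := by
    calc k / 4 * ‖γ t₂‖ ≤ k / 4 * (‖γ t₁‖ + 1 / k * (t₂ - t₁)) := by gcongr
      _ = _ := by field_simp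
  simp only at h2
  linarith

/-- A ray which is outside the ball of radius `R` and is moving outwards fast enough never comes
back to it. -/
lemma escape (hB : NiceMetric B k K) {R : ℝ} (hR0 : 0 < R) (hC : NearCone B (k ^ 2 / 4) R)
    {γ η : ℝ → En n} (h : IsRay B γ η) {t₁ : ℝ} (h1 : 0 ≤ t₁) (hR : R < ‖γ t₁‖)
    (hu : k / 4 * ‖γ t₁‖ < B (γ t₁) (η t₁) (γ t₁)) {t : ℝ} (ht : t₁ ≤ t) : R < ‖γ t‖ := by
  have hk := hB.k_pos
  by_contra hlt
  push Not at hlt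
  have hcont : ContinuousOn γ (Ici 0) := fun s hs => (h.deriv_pos s hs).continuousWithinAt
  have hcont' : ContinuousOn (fun s => ‖γ s‖) (Icc t₁ t) :=
    (hcont.mono fun s hs => h1.trans hs.1).norm
  -- the first time `t₂` at which the ball is reached
  have hcl : IsCompact (Icc t₁ t ∩ (fun s => ‖γ s‖) ⁻¹' Iic R) :=
    isCompact_Icc.of_isClosed_subset (hcont'.preimage_isClosed_of_isClosed isClosed_Icc isClosed_Iic)
      inter_subset_left
  obtain ⟨t₂, ⟨ht₂, ht₂R⟩, hmin⟩ := hcl.exists_isLeast ⟨t, right_mem_Icc.2 ht, hlt⟩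
  have hbefore : ∀ s ∈ Ico t₁ t₂, R < ‖γ s‖ := by
    intro s hs
    by_contra hcon
    exact absurd (hmin ⟨⟨hs.1, hs.2.le.trans ht₂.2⟩, not_lt.1 hcon⟩) (not_le.2 hs.2)
  have hsq : ∀ s, 0 ≤ s → HasDerivWithinAt (fun s => ‖γ s‖ ^ 2) (2 * ⟪γ s, η s⟫) (Ici 0) s :=
    fun s hs => (h.deriv_pos s hs).norm_sq
  have hmono : MonotoneOn (fun s => ‖γ s‖ ^ 2) (Icc t₁ t₂) := by
    refine monotoneOn_of_hasDerivWithinAt_nonneg (convex_Icc _ _) (f' := fun s => 2 * ⟪γ s, η s⟫)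
      (fun s hs => (hsq s (h1.trans hs.1)).continuousWithinAt.mono fun s hs => h1.trans hs.1)
      (fun s hs => ?_) fun s hs => ?_
    · rw [interior_Icc] at hs ⊢
      exact (hsq s (h1.trans hs.1.le)).mono fun s hs => h1.trans hs.1.le
    · rw [interior_Icc] at hs
      have h2 := hB.growth hC h h1 hs.1.le fun s' hs' =>
        (hbefore s' ⟨hs'.1, hs'.2.trans_lt hs.2⟩).le
      have h3 := (abs_le.1 (hC.radial (γ s) (hbefore s ⟨hs.1.le, hs.2⟩).le (η s))).2
      have h4 := hB.norm_vel_le (h.unit s (h1.trans hs.1.le))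
      have h5 : k ^ 2 / 4 * ‖η s‖ * ‖γ s‖ ≤ k ^ 2 / 4 * (1 / k) * ‖γ s‖ := by gcongr
      have h6 : k ^ 2 / 4 * (1 / k) * ‖γ s‖ = k / 4 * ‖γ s‖ := by field_simp
      rw [real_inner_comm (γ s) (η s)] at h3
      have := hs.1
      linarith
  have h2 := hmono (left_mem_Icc.2 ht₂.1) (right_mem_Icc.2 ht₂.1) ht₂.1
  have h3 : ‖γ t₂‖ ≤ R := ht₂R
  have h4 := norm_nonneg (γ t₂)
  simp only at h2
  nlinarith

/-- A ray which stays outside the ball of radius `R` eventually moves outwards fast enough. -/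
lemma exists_escape_time (hB : NiceMetric B k K) {R : ℝ} (hC : NearCone B (k ^ 2 / 4) R)
    {γ η : ℝ → En n} (h : IsRay B γ η) {T : ℝ} (hT : 0 ≤ T) (hR : ∀ t, T ≤ t → R < ‖γ t‖) :
    ∃ t₁, T ≤ t₁ ∧ k / 4 * ‖γ t₁‖ < B (γ t₁) (η t₁) (γ t₁) := by
  set c := B (γ T) (η T) (γ T) - k / 4 * ‖γ T‖ with hc
  have hle : T ≤ T + 4 * (|c| + 1) := by have := abs_nonneg c; linarith
  refine ⟨_, hle, ?_⟩
  have h1 := hB.growth hC h hT hle fun t ht => (hR t ht.1).le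
  rw [← hc] at h1
  have := neg_abs_le c
  linarith

/-- The exponential map parametrises rays. -/
lemma exists_ray_of_isExpAt (hB : NiceMetric B k K) {x ξ : En n} {ex : En n → En n}
    (hex : IsExpAt B.toMetric x ex) (hξ : B x ξ ξ = 1) {t : ℝ} (ht : 0 < t) :
    ∃ σ : ℝ → En n, IsRay B σ (derivWithin σ (Ici 0)) ∧ σ 0 = x ∧ derivWithin σ (Ici 0) 0 = ξ ∧
      ex (t • ξ) = σ t := by
  obtain ⟨c, hc0, hcd, hcg, hc1⟩ := hex (t • ξ)
  have hξ0 : ξ ≠ 0 := by rintro rfl; simp at hξ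
  have hspeed : √(B.toMetric x (t • ξ) (t • ξ)) = t := by
    simp only [BForm.toMetric, map_smul, smul_apply, smul_eq_mul, hξ, mul_one]
    exact Real.sqrt_mul_self ht.le
  rw [hspeed] at hcg
  have hdiff : DifferentiableAt ℝ c 0 := by
    by_contra hnd
    rw [deriv_zero_of_not_differentiableAt hnd] at hcd
    exact (smul_ne_zero ht.ne' hξ0) hcd.symm
  refine ⟨fun s => c (t⁻¹ * s), hB.isRay_of_isGeodesicOn ?_, by simpa using hc0, ?_, ?_⟩
  · intro s _
    obtain ⟨δ, hδ, hiso⟩ := hcg (t⁻¹ * s) (mem_univ _)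
    have hres : ∀ u : ℝ, |u - s| < t * δ → |t⁻¹ * u - t⁻¹ * s| < δ := by
      intro u hu
      rw [← mul_sub, abs_mul, abs_of_pos (inv_pos.2 ht), inv_mul_lt_iff₀ ht]
      exact hu
    refine ⟨t * δ, by positivity, fun u _ v _ hu hv => ?_⟩
    rw [hiso _ (mem_univ _) _ (mem_univ _) (hres u hu) (hres v hv), ← mul_sub, abs_mul,
      abs_of_pos (inv_pos.2 ht)]
    field_simp
  · have h1 : HasDerivAt (fun s : ℝ => t⁻¹ * s) t⁻¹ 0 := by
      simpa using (hasDerivAt_id (0 : ℝ)).const_mul t⁻¹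
    have h2 : HasDerivAt c (t • ξ) (t⁻¹ * 0) := by
      rw [mul_zero, ← hcd]; exact hdiff.hasDerivAt
    have h3 := h2.scomp (0 : ℝ) h1
    rw [smul_smul, inv_mul_cancel₀ ht.ne', one_smul] at h3
    exact h3.hasDerivWithinAt.derivWithin (uniqueDiffOn_Ici 0 0 (by simp))
  · rw [hc1]
    simp only [inv_mul_cancel₀ ht.ne']

/-- Properness of the exponential map forces every ray to leave every ball eventually. -/
lemma ray_leaves (hB : NiceMetric B k K) (hproper : ProperExpAll B.toMetric) {γ η : ℝ → En n}
    (h : IsRay B γ η) (R : ℝ) : ∃ T, 0 ≤ T ∧ ∀ t, T ≤ t → R < ‖γ t‖ := by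
  obtain ⟨ex, hex, hpr⟩ := hproper (γ 0)
  have hξ := h.unit 0 le_rfl
  have hξ0 : η 0 ≠ 0 := by
    intro h0
    rw [h0] at hξ
    simp at hξ
  have hpos : 0 < ‖η 0‖ := norm_pos_iff.2 hξ0
  obtain ⟨M, hM⟩ := (hpr _ (isCompact_closedBall 0 R)).isBounded.exists_norm_le
  refine ⟨(|M| + 1) / ‖η 0‖, by positivity, fun t ht => ?_⟩
  have htpos : 0 < t := lt_of_lt_of_le (by positivity) ht
  by_contra hlt
  obtain ⟨σ, hσ, hσ0, hσ1, hσt⟩ := hB.exists_ray_of_isExpAt hex hξ htpos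
  have heq := hB.ray_unique hσ h hσ0 hσ1 htpos.le
  have := hM (t • η 0) (by
    rw [mem_preimage, hσt, heq, mem_closedBall_zero_iff]
    exact not_lt.1 hlt)
  rw [norm_smul, Real.norm_of_nonneg htpos.le] at this
  rw [div_le_iff₀ hpos] at ht
  linarith [le_abs_self M]

/-- Uniform bound of the return times: the limit ray `σ` reaches at some time `t₁` the open escape
condition of `escape`, hence so do all but finitely many `γ j`; the remaining ones are handled one
by one by `ray_leaves`. -/
lemma return_time_bound (hB : NiceMetric B k K) (hC : ∃ R, NearCone B (k ^ 2 / 4) R)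
    (hproper : ProperExpAll B.toMetric) (γ : ℕ → ℝ → En n) (r : ℝ) (p ξ : En n)
    (hgeo : ∀ j, IsGeodesicOn (rdist B.toMetric) (γ j) 1 (Ici 0))
    (hstart : ∀ j, ‖γ j 0‖ = r) (hp : ‖p‖ = r) (hξ : B p ξ ξ = 1)
    (hconv0 : Tendsto (fun j => γ j 0) atTop (nhds p))
    (hconv1 : Tendsto (fun j => derivWithin (γ j) (Ici 0) 0) atTop (nhds ξ)) :
    ∃ C : ℝ, ∀ j, ∀ t : ℝ, 0 < t → ‖γ j t‖ = r → t ≤ C := by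
  obtain ⟨R₁, hC₁⟩ := hC
  set R := max (max R₁ r) 1 with hRdef
  have hR1 : R₁ ≤ R := (le_max_left _ _).trans (le_max_left _ _)
  have hRr : r ≤ R := (le_max_right _ _).trans (le_max_left _ _)
  have hR0 : 0 < R := lt_of_lt_of_le one_pos (le_max_right _ _)
  have hCR : NearCone B (k ^ 2 / 4) R :=
    ⟨fun x hx => hC₁.radial x (hR1.trans hx), fun x hx => hC₁.deriv x (hR1.trans hx)⟩
  have hray : ∀ j, IsRay B (γ j) (derivWithin (γ j) (Ici 0)) := fun j =>
    hB.isRay_of_isGeodesicOn (hgeo j)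
  obtain ⟨ex, hex, -⟩ := hproper p
  obtain ⟨σ, hσ, hσ0, hσ1, -⟩ := hB.exists_ray_of_isExpAt hex hξ one_pos
  obtain ⟨T, hT, hTR⟩ := hB.ray_leaves hproper hσ R
  obtain ⟨t₁, ht₁, hu⟩ := hB.exists_escape_time hCR hσ hT hTR
  have hlim := hB.ray_tendsto hray hσ (r := r) (fun j => (hstart j).le) (by rw [hσ0, hp])
    (by rwa [hσ0]) (by rwa [hσ1]) (hT.trans ht₁)
  have hl1 : Tendsto (fun j => γ j t₁) atTop (nhds (σ t₁)) :=
    (continuous_fst.tendsto _).comp hlim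
  have hpair : Continuous fun z : En n × (En n →L[ℝ] ℝ) => z.2 z.1 :=
    continuous_snd.clm_apply continuous_fst
  have hl2 : Tendsto (fun j => B (γ j t₁) (derivWithin (γ j) (Ici 0) t₁) (γ j t₁)) atTop
      (nhds (B (σ t₁) (derivWithin σ (Ici 0) t₁) (σ t₁))) := (hpair.tendsto _).comp hlim
  have hev : ∀ᶠ j in atTop, R < ‖γ j t₁‖ ∧ k / 4 * ‖γ j t₁‖ <
      B (γ j t₁) (derivWithin (γ j) (Ici 0) t₁) (γ j t₁) :=
    (hl1.norm.eventually_const_lt (hTR t₁ ht₁)).and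
      ((hl1.norm.const_mul (k / 4)).eventually_lt hl2 hu)
  obtain ⟨J, hJ⟩ := eventually_atTop.1 hev
  choose S hS0 hS using fun j => hB.ray_leaves hproper (hray j) R
  refine ⟨max t₁ (∑ j ∈ Finset.range J, S j), fun j t ht htr => ?_⟩
  by_contra hlt
  push Not at hlt
  have hlt1 := (le_max_left _ _).trans_lt hlt
  have hlt2 := (le_max_right _ _).trans_lt hlt
  have : R < ‖γ j t‖ := by
    by_cases hj : J ≤ j
    · obtain ⟨h1, h2⟩ := hJ j hj
      exact hB.escape hR0 hCR (hray j) (hT.trans ht₁) h1 h2 hlt1.le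
    · refine hS j t (le_trans ?_ hlt2.le)
      exact Finset.single_le_sum (fun i _ => hS0 i) (Finset.mem_range.2 (not_le.1 hj))
  linarith

end NiceMetric

/-! ### Asymptotically conical metrics -/

/-- The bilinear form with coefficients `c i j` in the standard basis. -/
noncomputable def formOf {n : ℕ} (c : Fin n → Fin n → ℝ) : En n →L[ℝ] En n →L[ℝ] ℝ :=
  ∑ i, ∑ j, c i j • (EuclideanSpace.proj i : En n →L[ℝ] ℝ).smulRight
    (EuclideanSpace.proj j : En n →L[ℝ] ℝ)

lemma formOf_apply {n : ℕ} (c : Fin n → Fin n → ℝ) (v w : En n) :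
    formOf c v w = ∑ i, ∑ j, c i j * (v i * w j) := by
  simp [formOf, sum_apply]

lemma abs_sum_coeff_le {n : ℕ} {c : Fin n → Fin n → ℝ} {ε : ℝ}
    (hc : ∀ i j, |c i j| ≤ ε) (v w : En n) :
    |∑ i, ∑ j, c i j * (v i * w j)| ≤ (n * n * ε) * ‖v‖ * ‖w‖ := by
  calc |∑ i, ∑ j, c i j * (v i * w j)| ≤ ∑ i, ∑ j, |c i j * (v i * w j)| :=
        (Finset.abs_sum_le_sum_abs _ _).trans
          (Finset.sum_le_sum fun i _ => Finset.abs_sum_le_sum_abs _ _)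
    _ ≤ ∑ _i : Fin n, ∑ _j : Fin n, ε * (‖v‖ * ‖w‖) := by
        refine Finset.sum_le_sum fun i _ => Finset.sum_le_sum fun j _ => ?_
        rw [abs_mul, abs_mul]
        have h1 : |v i| ≤ ‖v‖ := PiLp.norm_apply_le v i
        have h2 : |w j| ≤ ‖w‖ := PiLp.norm_apply_le w j
        have h3 := hc i j
        have h4 := (abs_nonneg _).trans h3
        gcongr
    _ = _ := by simp; ring

/-- A function which is additive and homogeneous in each variable is determined by its values on
the standard basis. -/
lemma bilin_expand {n : ℕ} {b : En n → En n → ℝ} (symm : ∀ v w, b v w = b w v)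
    (add_left : ∀ v w u, b (v + w) u = b v u + b w u)
    (smul_left : ∀ (a : ℝ) v u, b (a • v) u = a * b v u) (v w : En n) :
    b v w = ∑ i, ∑ j,
      b (EuclideanSpace.single i 1) (EuclideanSpace.single j 1) * (v i * w j) := by
  have key : ∀ v u : En n, b v u = ∑ i, v i * b (EuclideanSpace.single i 1) u := by
    intro v u
    let L : En n →ₗ[ℝ] ℝ :=
      { toFun := fun v => b v u, map_add' := fun v w => add_left v w u
        map_smul' := fun a v => smul_left a v u }
    have h : v = ∑ i, v i • (EuclideanSpace.single i (1 : ℝ) : En n) := by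
      ext j
      simp [Finset.sum_apply, Pi.single_apply]
    have h2 : L v = ∑ i, v i * L (EuclideanSpace.single i 1) := by
      conv_lhs => rw [h]
      simp
    exact h2
  rw [key v w]
  refine Finset.sum_congr rfl fun i _ => ?_
  rw [symm, key w, Finset.mul_sum]
  refine Finset.sum_congr rfl fun j _ => ?_
  rw [symm (EuclideanSpace.single j 1)]
  ring

lemma coneMetric_expand {n : ℕ} (α : ℝ) (x v w : En n) :
    coneMetric n α x v w = ∑ i, ∑ j,
      coneMetric n α x (EuclideanSpace.single i 1) (EuclideanSpace.single j 1) * (v i * w j) := by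
  refine bilin_expand (b := coneMetric n α x) (fun v w => ?_) (fun v w u => ?_)
    (fun a v u => ?_) v w
  · simp only [coneMetric, real_inner_comm v w]; ring
  · simp only [coneMetric, inner_add_left]; ring
  · simp only [coneMetric, real_inner_smul_left]; ring

lemma coneMetric_radial {n : ℕ} (α : ℝ) {x : En n} (hx : x ≠ 0) (v : En n) :
    coneMetric n α x v x = ⟪v, x⟫ := by
  have : ‖x‖ ≠ 0 := norm_ne_zero_iff.2 hx
  simp only [coneMetric, real_inner_self_eq_norm_sq]
  field_simp
  ring

lemma le_coneMetric {n : ℕ} (α : ℝ) (x v : En n) :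
    sin α ^ 2 * ‖v‖ ^ 2 ≤ coneMetric n α x v v := by
  simp only [coneMetric, real_inner_self_eq_norm_sq]
  have h1 : 0 ≤ ⟪v, x⟫ * ⟪v, x⟫ / ‖x‖ ^ 2 := div_nonneg (mul_self_nonneg _) (sq_nonneg _)
  have h2 := sin_sq_le_one α
  nlinarith

lemma coneMetric_le {n : ℕ} (α : ℝ) (x v : En n) : coneMetric n α x v v ≤ ‖v‖ ^ 2 := by
  simp only [coneMetric, real_inner_self_eq_norm_sq]
  have h1 : ⟪v, x⟫ * ⟪v, x⟫ / ‖x‖ ^ 2 ≤ ‖v‖ ^ 2 := by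
    refine div_le_of_le_mul₀ (sq_nonneg _) (sq_nonneg _) ?_
    have := abs_real_inner_le_norm v x
    rw [← abs_mul_abs_self, ← mul_pow, sq]
    gcongr
  have h2 := sin_sq_le_one α
  nlinarith

/-- The cone metric is invariant under dilations of the base point. -/
lemma coneMetric_smul {n : ℕ} (α : ℝ) {s : ℝ} (hs : s ≠ 0) (x v w : En n) :
    coneMetric n α (s • x) v w = coneMetric n α x v w := by
  rcases eq_or_ne x 0 with rfl | hx
  · simp
  · have : ‖x‖ ≠ 0 := norm_ne_zero_iff.2 hx
    simp only [coneMetric, real_inner_smul_right, norm_smul, mul_pow, Real.norm_eq_abs, sq_abs]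
    field_simp

lemma differentiableAt_coneMetric {n : ℕ} (α : ℝ) {x : En n} (hx : x ≠ 0) (v w : En n) :
    DifferentiableAt ℝ (fun y => coneMetric n α y v w) x := by
  have hx2 : ‖x‖ ^ 2 ≠ 0 := pow_ne_zero 2 (norm_ne_zero_iff.2 hx)
  have h1 : ∀ u : En n, DifferentiableAt ℝ (fun y : En n => ⟪u, y⟫) x := fun u =>
    (differentiableAt_const u).inner ℝ differentiableAt_id
  have h2 : DifferentiableAt ℝ (fun y : En n => ‖y‖ ^ 2) x :=
    differentiableAt_id.norm_sq ℝ
  have h3 : DifferentiableAt ℝ (fun y : En n => ⟪v, y⟫ * ⟪w, y⟫ / ‖y‖ ^ 2) x := by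
    simp only [div_eq_mul_inv]
    exact ((h1 v).fun_mul (h1 w)).fun_mul (h2.fun_inv hx2)
  exact (h3.const_mul _).add (differentiableAt_const _)

lemma hasDerivAt_ray {n : ℕ} {F : Type*} [NormedAddCommGroup F] [NormedSpace ℝ F]
    {f : En n → F} {x : En n} (hf : DifferentiableAt ℝ f x) :
    HasDerivAt (fun s : ℝ => f (s • x)) (fderiv ℝ f x x) 1 := by
  have h1 : HasDerivAt (fun s : ℝ => s • x) x 1 := by
    simpa using (hasDerivAt_id (1 : ℝ)).smul_const x
  have h2 : HasFDerivAt f (fderiv ℝ f x) ((1 : ℝ) • x) := by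
    rw [one_smul]; exact hf.hasFDerivAt
  exact h2.comp_hasDerivAt 1 h1

lemma contDiff_smul_fixed {E F : Type*} [NormedAddCommGroup E] [NormedSpace ℝ E]
    [NormedAddCommGroup F] [NormedSpace ℝ F] {f : E → ℝ} (hf : ContDiff ℝ 2 f) (c : F) :
    ContDiff ℝ 2 fun x => f x • c := hf.smul contDiff_const

/-- A continuous family of quadratic functions, positive definite at each point of a ball, is
uniformly equivalent to the squared norm there. -/
lemma exists_bounds_of_quadratic {E F : Type*} [NormedAddCommGroup E] [ProperSpace E]
    [NormedAddCommGroup F] [NormedSpace ℝ F] [ProperSpace F] [Nontrivial F] {q : E × F → ℝ}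
    (hq : Continuous q)
    (hpos : ∀ x v, v ≠ 0 → 0 < q (x, v)) (hsmul : ∀ x (a : ℝ) v, q (x, a • v) = a ^ 2 * q (x, v))
    {R : ℝ} (hR : 0 ≤ R) : ∃ m > 0, ∃ M > 0, ∀ x v, ‖x‖ ≤ R →
      m * ‖v‖ ^ 2 ≤ q (x, v) ∧ q (x, v) ≤ M * ‖v‖ ^ 2 := by
  have hcpt : IsCompact (Metric.closedBall (0 : E) R ×ˢ Metric.sphere (0 : F) 1) :=
    (isCompact_closedBall _ _).prod (isCompact_sphere _ _)
  obtain ⟨e, he⟩ := exists_norm_eq F zero_le_one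
  have hne : (Metric.closedBall (0 : E) R ×ˢ Metric.sphere (0 : F) 1).Nonempty :=
    ⟨(0, e), by simp [hR], by simp [he]⟩
  obtain ⟨⟨x₀, v₀⟩, hz₀, hmin⟩ := hcpt.exists_isMinOn hne hq.continuousOn
  obtain ⟨⟨x₁, v₁⟩, hz₁, hmax⟩ := hcpt.exists_isMaxOn hne hq.continuousOn
  have hne0 : ∀ v : F, v ∈ Metric.sphere (0 : F) 1 → v ≠ 0 := by
    rintro v hv rfl
    simp at hv
  refine ⟨q (x₀, v₀), hpos _ _ (hne0 _ hz₀.2), q (x₁, v₁), hpos _ _ (hne0 _ hz₁.2),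
    fun x v hx => ?_⟩
  rcases eq_or_ne v 0 with rfl | hv
  · have := hsmul x 0 0
    simp at this
    simp [this]
  have hv' : 0 < ‖v‖ := norm_pos_iff.2 hv
  have hmem : (x, ‖v‖⁻¹ • v) ∈ Metric.closedBall (0 : E) R ×ˢ Metric.sphere (0 : F) 1 :=
    ⟨by simpa using hx, by simp [norm_smul, hv'.ne']⟩
  have e : q (x, ‖v‖⁻¹ • v) * ‖v‖ ^ 2 = q (x, v) := by
    rw [hsmul]
    field_simp
  rw [← e]
  have a1 : q (x₀, v₀) ≤ q (x, ‖v‖⁻¹ • v) := hmin hmem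
  have a2 : q (x, ‖v‖⁻¹ • v) ≤ q (x₁, v₁) := hmax hmem
  constructor <;> gcongr

namespace IsAsympConical

variable {n : ℕ} {g : MetricTensor n} {α μ : ℝ}

/-- The field of continuous bilinear forms with the same components as `g` in the standard basis;
it agrees with `g` when `g` is bilinear. -/
noncomputable def _root_.MetricTensor.form {n : ℕ} (g : MetricTensor n) : BForm n := fun x =>
  formOf fun i j => g x (EuclideanSpace.single i 1) (EuclideanSpace.single j 1)

lemma form_apply (hg : IsAsympConical n g α μ) (x v w : En n) : g.form x v w = g x v w := by
  rw [MetricTensor.form, formOf_apply]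
  exact (bilin_expand (hg.symm x) (hg.add_left x) (hg.smul_left x) v w).symm

lemma toMetric_form (hg : IsAsympConical n g α μ) : g.form.toMetric = g := by
  funext x v w
  exact hg.form_apply x v w

lemma contDiff_form (hg : IsAsympConical n g α μ) : ContDiff ℝ 2 g.form := by
  unfold MetricTensor.form formOf
  exact ContDiff.sum fun i _ => ContDiff.sum fun j _ => contDiff_smul_fixed (hg.reg i j) _

/-- The coefficients of `A = g - g_cone` and their radial derivatives tend to zero at infinity; the
radial derivatives of the coefficients of `A` and `g` agree because those of the cone are constant
along rays. -/
lemma exists_coeff_small (hg : IsAsympConical n g α μ) (hμ : 0 < μ) {ε : ℝ} (hε : 0 < ε)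
    (i j : Fin n) : ∃ R > 0, ∀ x : En n, R ≤ ‖x‖ →
      |g x (EuclideanSpace.single i 1) (EuclideanSpace.single j 1) -
        coneMetric n α x (EuclideanSpace.single i 1) (EuclideanSpace.single j 1)| ≤ ε ∧
      |fderiv ℝ (fun y => g y (EuclideanSpace.single i 1) (EuclideanSpace.single j 1)) x x|
        ≤ ε := by
  obtain ⟨C, R, hC, h⟩ := hg.decay i j
  have htend : Tendsto (fun ρ : ℝ => C * ρ ^ (-μ)) atTop (nhds 0) := by
    simpa using (tendsto_rpow_neg_atTop hμ).const_mul C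
  obtain ⟨R', hR'⟩ := eventually_atTop.1 (htend.eventually_le_const hε)
  refine ⟨max 1 (max R R'), by positivity, fun x hx => ?_⟩
  have hx1 : 1 ≤ ‖x‖ := (le_max_left _ _).trans hx
  have hxR : R ≤ ‖x‖ := ((le_max_left _ _).trans (le_max_right _ _)).trans hx
  have hxR' : R' ≤ ‖x‖ := ((le_max_right _ _).trans (le_max_right _ _)).trans hx
  have hx0 : x ≠ 0 := norm_pos_iff.1 (by linarith)
  have hsmall := hR' _ hxR'
  set u : En n := EuclideanSpace.single i 1
  set w : En n := EuclideanSpace.single j 1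
  set a : En n → ℝ := fun y => g y u w - coneMetric n α y u w with ha
  constructor
  · have h0 := h x hxR 0 (by norm_num)
    rw [norm_iteratedFDeriv_zero] at h0
    simpa using h0.trans (by simpa using hsmall)
  · have h1 := h x hxR 1 (by norm_num)
    rw [norm_iteratedFDeriv_one] at h1
    have hgd : DifferentiableAt ℝ (fun y => g y u w) x :=
      (hg.reg i j).differentiable (by norm_num) x
    have had : DifferentiableAt ℝ a x := hgd.sub (differentiableAt_coneMetric α hx0 u w)
    have hd1 := hasDerivAt_ray had
    have hd2 := (hasDerivAt_ray hgd).sub_const (coneMetric n α x u w)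
    have heq : (fun s : ℝ => a (s • x)) =ᶠ[nhds 1]
        fun s => g (s • x) u w - coneMetric n α x u w := by
      filter_upwards [eventually_ne_nhds (one_ne_zero : (1 : ℝ) ≠ 0)] with s hs
      simp only [ha, coneMetric_smul α hs]
    have hfe : fderiv ℝ (fun y => g y u w) x x = fderiv ℝ a x x :=
      (hd2.congr_of_eventuallyEq heq).unique hd1
    rw [hfe]
    calc |fderiv ℝ a x x| ≤ ‖fderiv ℝ a x‖ * ‖x‖ := (fderiv ℝ a x).le_opNorm x
      _ ≤ C * ‖x‖ ^ (-μ - ((1 : ℕ) : ℝ)) * ‖x‖ := by gcongr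
      _ = C * ‖x‖ ^ (-μ) := by
          rw [Nat.cast_one, Real.rpow_sub_one (by positivity)]
          field_simp
      _ ≤ ε := hsmall

/-- Far out, the metric is close to the cone metric and its radial derivative is small. -/
lemma exists_close (hg : IsAsympConical n g α μ) (hμ : 0 < μ) {ε : ℝ} (hε : 0 < ε) :
    ∃ R > 0, ∀ x : En n, R ≤ ‖x‖ →
      (∀ v w, |g.form x v w - coneMetric n α x v w| ≤ ε * ‖v‖ * ‖w‖) ∧
      (∀ v, |fderiv ℝ g.form x x v v| ≤ ε * ‖v‖ * ‖v‖) := by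
  have hδ : 0 < ε / (n * n + 1) := by positivity
  have hle : n * n * (ε / (n * n + 1)) ≤ ε := by
    rw [mul_div_assoc', div_le_iff₀ (by positivity)]
    nlinarith
  choose R hR0 hR using fun i j => hg.exists_coeff_small hμ hδ i j
  refine ⟨1 + ∑ i, ∑ j, R i j, ?_, fun x hx => ?_⟩
  · have : 0 ≤ ∑ i, ∑ j, R i j :=
      Finset.sum_nonneg fun i _ => Finset.sum_nonneg fun j _ => (hR0 i j).le
    linarith
  have hx' : ∀ i j, R i j ≤ ‖x‖ := by
    intro i j
    have h1 : R i j ≤ ∑ j, R i j :=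
      Finset.single_le_sum (f := fun j => R i j) (fun j _ => (hR0 i j).le) (Finset.mem_univ j)
    have h2 : ∑ j, R i j ≤ ∑ i, ∑ j, R i j :=
      Finset.single_le_sum (f := fun i => ∑ j, R i j)
        (fun i _ => Finset.sum_nonneg fun j _ => (hR0 i j).le) (Finset.mem_univ i)
    linarith
  constructor
  · intro v w
    have h1 : g.form x v w - coneMetric n α x v w = ∑ i, ∑ j,
        (g x (EuclideanSpace.single i 1) (EuclideanSpace.single j 1) -
          coneMetric n α x (EuclideanSpace.single i 1) (EuclideanSpace.single j 1)) *
          (v i * w j) := by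
      rw [coneMetric_expand, MetricTensor.form, formOf_apply]
      simp only [← Finset.sum_sub_distrib, sub_mul]
    rw [h1]
    refine (abs_sum_coeff_le (fun i j => (hR i j x (hx' i j)).1) v w).trans ?_
    gcongr
  · intro v
    have h1 : HasDerivAt (fun s : ℝ => g.form (s • x) v v) (fderiv ℝ g.form x x v v) 1 := by
      have h2 := hasDerivAt_ray (hg.contDiff_form.differentiable (by norm_num) x)
      have h3 := (h2.clm_apply (hasDerivAt_const (1 : ℝ) v)).clm_apply (hasDerivAt_const (1 : ℝ) v)
      simpa using h3
    have h2 : HasDerivAt (fun s : ℝ => g.form (s • x) v v) (∑ i, ∑ j,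
        fderiv ℝ (fun y => g y (EuclideanSpace.single i 1) (EuclideanSpace.single j 1)) x x *
          (v i * v j)) 1 := by
      simp only [MetricTensor.form, formOf_apply]
      exact HasDerivAt.fun_sum fun i _ => HasDerivAt.fun_sum fun j _ =>
        (hasDerivAt_ray ((hg.reg i j).differentiable (by norm_num) x)).mul_const _
    rw [h1.unique h2]
    refine (abs_sum_coeff_le (fun i j => (hR i j x (hx' i j)).2) v v).trans ?_
    gcongr

lemma exists_nearCone (hg : IsAsympConical n g α μ) (hμ : 0 < μ) {ε : ℝ} (hε : 0 < ε) :
    ∃ R, NearCone g.form ε R := by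
  obtain ⟨R, hR0, hR⟩ := hg.exists_close hμ hε
  refine ⟨R, fun x hx v => ?_, fun x hx => (hR x hx).2⟩
  have hx0 : x ≠ 0 := norm_pos_iff.1 (hR0.trans_le hx)
  have := (hR x hx).1 v x
  rwa [coneMetric_radial α hx0] at this

/-- An asymptotically conical metric is uniformly equivalent to the Euclidean one: by compactness
of a large ball, and by comparison with the cone outside it. -/
lemma exists_niceMetric (hg : IsAsympConical n g α μ) (hn : 2 ≤ n) (hα : α ∈ Ioo 0 (π / 2))
    (hμ : 0 < μ) : ∃ k K, NiceMetric g.form k K := by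
  have hs : 0 < sin α := sin_pos_of_pos_of_lt_pi hα.1 (by linarith [hα.2, pi_pos])
  obtain ⟨R, hR0, hR⟩ := hg.exists_close hμ (ε := sin α ^ 2 / 2) (by positivity)
  have : Nonempty (Fin n) := ⟨⟨0, by omega⟩⟩
  have hcont : Continuous fun z : En n × En n => g.form z.1 z.2 z.2 :=
    ((hg.contDiff_form.continuous.comp continuous_fst).clm_apply continuous_snd).clm_apply
      continuous_snd
  obtain ⟨m, h0, M, h1, hscale⟩ := exists_bounds_of_quadratic hcont
    (fun x v hv => by simpa only [hg.form_apply] using hg.posdef x v hv)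
    (fun x a v => by simp only [map_smul, smul_apply, smul_eq_mul]; ring) hR0.le
  have hfar : ∀ x v : En n, R ≤ ‖x‖ → sin α ^ 2 / 2 * ‖v‖ ^ 2 ≤ g.form x v v ∧
      g.form x v v ≤ 2 * ‖v‖ ^ 2 := by
    intro x v hx
    have b1 := abs_le.1 ((hR x hx).1 v v)
    have b2 := le_coneMetric α x v
    have b3 := coneMetric_le α x v
    have b4 := sin_sq_le_one α
    constructor <;> nlinarith [b1.1, b1.2, sq_nonneg ‖v‖]
  refine ⟨√(min m (sin α ^ 2 / 2)), √(max M 2), hg.contDiff_form, ?_, ?_, ?_, ?_, ?_⟩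
  · intro x v w
    rw [hg.form_apply, hg.form_apply, hg.symm]
  · exact Real.sqrt_pos.2 (lt_min h0 (by positivity))
  · positivity
  · intro x v
    have h2 : 0 ≤ min m (sin α ^ 2 / 2) := le_min h0.le (by positivity)
    rw [mul_pow, Real.sq_sqrt h2]
    rcases le_total ‖x‖ R with hx | hx
    · refine le_trans ?_ (hscale x v hx).1
      gcongr
      exact min_le_left _ _
    · refine le_trans ?_ (hfar x v hx).1
      gcongr
      exact min_le_right _ _
  · intro x v
    rw [mul_pow, Real.sq_sqrt (by positivity)]
    rcases le_total ‖x‖ R with hx | hx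
    · refine (hscale x v hx).2.trans ?_
      gcongr
      exact le_max_left _ _
    · refine (hfar x v hx).2.trans ?_
      gcongr
      exact le_max_right _ _

end IsAsympConical

/-- uniform return-time bound for geodesic rays.
Let `(ℝⁿ,g)` be asymptotically conical with proper exponential maps, and let
`γ_j : [0,∞) → M` be arc-length geodesic rays with `γ_j(0) ∈ ∂B(o,r)`, unit initial
velocity, and `(γ_j(0), γ̇_j(0)) → (p, ξ)`. Then the last times `T_j` at which
`|γ_j(T_j)| = r` are finite and uniformly bounded: there is `C` such that every `t > 0`
with `|γ_j(t)| = r` satisfies `t ≤ C` (so `sup_j T_j = sup_j ℓ_g(γ_j|_{[0,T_j]}) < ∞`). -/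
theorem statement_12 (n : ℕ) (hn : 2 ≤ n) (g : MetricTensor n) (α μ : ℝ)
    (hα : α ∈ Set.Ioo 0 (π / 2)) (hμ : 0 < μ) (hg : IsAsympConical n g α μ)
    (hproper : ProperExpAll g)
    (γ : ℕ → ℝ → En n) (r : ℝ) (hr : 0 < r) (p ξ : En n)
    (hgeo : ∀ j, IsGeodesicOn (rdist g) (γ j) 1 (Set.Ici 0))
    (hstart : ∀ j, ‖γ j 0‖ = r)
    (hunit : ∀ j, g (γ j 0) (derivWithin (γ j) (Set.Ici 0) 0)
      (derivWithin (γ j) (Set.Ici 0) 0) = 1)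
    (hp : ‖p‖ = r) (hξ : g p ξ ξ = 1)
    (hconv0 : Filter.Tendsto (fun j => γ j 0) Filter.atTop (nhds p))
    (hconv1 : Filter.Tendsto (fun j => derivWithin (γ j) (Set.Ici 0) 0)
      Filter.atTop (nhds ξ)) :
    ∃ C : ℝ, ∀ j, ∀ t : ℝ, 0 < t → ‖γ j t‖ = r → t ≤ C := by
  obtain ⟨k, K, hB⟩ := hg.exists_niceMetric hn hα hμ
  have hform := hg.toMetric_form
  have hk := hB.k_pos
  refine hB.return_time_bound (hg.exists_nearCone hμ (by positivity)) (by rwa [hform]) γ r p ξ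
    (by rwa [hform]) hstart hp (by rwa [hg.form_apply]) hconv0 hconv1
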